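/- arXiv:0712.1785 — 2 statements merged into one kernel-verified Lean document; each statement's English description precedes it below -/
import Mathlib

section
/- Let k be a number field, let k_v be the completion of k at a nonarchimedean place v, and let m ∈ ℤ_{>0}. Then the set k_v^{×m} ∩ k (the nonzero elements of k that are m-th powers in k_v) is diophantine over k. -/
/-- A subset `A ⊆ k^n` is diophantine over `k` if there exist `m ∈ ℕ` and finitely many
polynomials `f₁, …, f_r ∈ k[x₁, …, x_{n+m}]` such that
`A = {a ∈ k^n : ∃ b ∈ k^m, f_i(a,b) = 0 for all i}`. -/
def IsDiophantine (k : Type*) [Field k] {n : ℕ} (A : Set (Fin n → k)) : Prop :=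
  ∃ (m r : ℕ) (f : Fin r → MvPolynomial (Fin (n + m)) k),
    A = {a : Fin n → k | ∃ b : Fin m → k,
      ∀ i : Fin r, MvPolynomial.eval (Fin.append a b) (f i) = 0}

/-- A subset of `k` is diophantine if the corresponding subset of `k¹` is. -/
def IsDiophantineSet (k : Type*) [Field k] (A : Set k) : Prop :=
  IsDiophantine k {x : Fin 1 → k | x 0 ∈ A}

open IsDedekindDomain

section IntegralRelations
open NumberField
variable {k : Type*} [Field k] [NumberField k]

/-- The norm of an algebraic integer is the product of its conjugates. -/
theorem absNorm_span_singleton_eq_prod (x : 𝓞 k) :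
    ((Ideal.span {x}).absNorm : ℝ) = ∏ φ : k →+* ℂ, ‖φ x‖ := by
  have h1 : (Algebra.norm ℚ (x : k) : ℂ) = ∏ φ : k →+* ℂ, φ x := by
    have := Algebra.norm_eq_prod_embeddings ℚ ℂ (x : k)
    rw [← Fintype.prod_equiv (RingHom.equivRatAlgHom (R := k) (S := ℂ)) (fun φ => φ (x : k)) _
      (fun φ => rfl)] at this
    simpa using this
  have h2 := congrArg norm h1
  rw [norm_prod] at h2
  rw [← h2, Ideal.absNorm_span_singleton, ← Algebra.coe_norm_int, Nat.cast_natAbs]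
  simp

theorem house_le_iff {x : k} {X : ℝ} (hX : 0 ≤ X) : house x ≤ X ↔ ∀ φ : k →+* ℂ, ‖φ x‖ ≤ X := by
  constructor
  · intro h φ
    exact (norm_embedding_le_house x φ).trans h
  · intro h
    rw [house, pi_norm_le_iff_of_nonneg hX]
    intro φ
    exact h φ

variable (k) in
theorem finite_setOf_house_le (X : ℝ) : {x : 𝓞 k | house (x : k) ≤ X}.Finite := by
  have := Embeddings.finite_of_norm_le k ℂ X
  refine Set.Finite.of_finite_image (f := fun x : 𝓞 k => (x : k)) (this.subset ?_)
    (fun x _ y _ h => RingOfIntegers.ext h)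
  rintro _ ⟨x, hx, rfl⟩
  exact ⟨RingOfIntegers.isIntegral_coe x, fun φ => (norm_embedding_le_house _ φ).trans hx⟩

variable (k) in
/-- The algebraic integers all of whose conjugates are bounded by `X`. -/
noncomputable def houseBall (X : ℝ) : Finset (𝓞 k) := (finite_setOf_house_le k X).toFinset

@[simp] theorem mem_houseBall {X : ℝ} {x : 𝓞 k} : x ∈ houseBall k X ↔ house (x : k) ≤ X := by
  simp [houseBall]

theorem absNorm_le_absNorm_of_mem {J : Ideal (𝓞 k)} {x : 𝓞 k} (hx : x ∈ J) (h0 : x ≠ 0) :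
    (J.absNorm : ℝ) ≤ (Ideal.span {x}).absNorm := by
  have h1 : J.absNorm ∣ (Ideal.span {x}).absNorm :=
    Ideal.absNorm_dvd_absNorm_of_le ((Ideal.span_singleton_le_iff_mem _).2 hx)
  exact_mod_cast Nat.le_of_dvd (Nat.pos_of_ne_zero (by simpa [Ideal.absNorm_eq_zero_iff] using h0)) h1

/-- A real coordinate attached to a complex embedding. -/
noncomputable def realCoord (φ : k →+* ℂ) (x : k) : ℝ := (φ x).re + (φ x).im

theorem realCoord_sub (φ : k →+* ℂ) (x y : k) :
    realCoord φ (x - y) = realCoord φ x - realCoord φ y := by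
  simp [realCoord]; ring

theorem abs_realCoord_le (φ : k →+* ℂ) (x : k) : |realCoord φ x| ≤ 2 * ‖φ x‖ := by
  have h1 := Complex.abs_re_le_norm (φ x)
  have h2 := Complex.abs_im_le_norm (φ x)
  have := abs_add_le (φ x).re (φ x).im
  unfold realCoord
  linarith

theorem norm_lt_of_realCoord_lt {φ : k →+* ℂ} {x : k} {s : ℝ} (h1 : |realCoord φ x| < s)
    (h2 : |realCoord (ComplexEmbedding.conjugate φ) x| < s) : ‖φ x‖ < s := by
  have hs : 0 < s := (abs_nonneg _).trans_lt h1
  have h3 : ‖φ x‖ ^ 2 = (φ x).re ^ 2 + (φ x).im ^ 2 := by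
    rw [Complex.sq_norm, Complex.normSq_apply]; ring
  have h1' := sq_lt_sq' (neg_lt_of_abs_lt h1) (lt_of_abs_lt h1)
  have h2' := sq_lt_sq' (neg_lt_of_abs_lt h2) (lt_of_abs_lt h2)
  simp only [realCoord, ComplexEmbedding.conjugate_coe_eq, Complex.conj_re, Complex.conj_im] at h1' h2'
  exact lt_of_pow_lt_pow_left₀ 2 hs.le (by nlinarith)

variable (k) in
/-- Counting elements of an ideal in a box. -/
theorem exists_card_le_of_box : ∃ C : ℝ, 0 < C ∧ ∀ (J : Ideal (𝓞 k)) (_ : J ≠ ⊥)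
    (τ : (k →+* ℂ) → ℝ) (_ : ∀ φ, 0 < τ φ) (_ : ∀ φ, τ (ComplexEmbedding.conjugate φ) = τ φ)
    (S : Finset (𝓞 k)) (_ : ∀ x ∈ S, x ∈ J) (_ : ∀ x ∈ S, ∀ φ : k →+* ℂ, ‖φ x‖ ≤ τ φ),
    (S.card : ℝ) ≤ C * (1 + (∏ φ, τ φ) / J.absNorm) := by
  classical
  set N := Fintype.card (k →+* ℂ) with hN
  have hN0 : N ≠ 0 := Fintype.card_ne_zero
  refine ⟨10 ^ N, by positivity, ?_⟩
  intro J hJ τ hτ hsym S hSJ hS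
  have hJ0 : (0 : ℝ) < J.absNorm := by
    have : J.absNorm ≠ 0 := by simpa [Ideal.absNorm_eq_zero_iff] using hJ
    positivity
  set Q : ℝ := (∏ φ, τ φ) / J.absNorm with hQ
  have hQ0 : 0 < Q := div_pos (Finset.prod_pos fun φ _ => hτ φ) hJ0
  obtain ⟨q, hq0, hqN⟩ : ∃ q : ℝ, 0 < q ∧ q ^ N = Q :=
    ⟨Q ^ ((N : ℝ)⁻¹), by positivity, Real.rpow_inv_natCast_pow hQ0.le hN0⟩
  set M : ℕ := ⌈q⌉₊ with hM
  have hM1 : 1 ≤ M := Nat.one_le_ceil_iff.2 hq0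
  have hMq : q ≤ M := Nat.le_ceil _
  have hMq' : (M : ℝ) < q + 1 := Nat.ceil_lt_add_one hq0.le
  have hM0 : (0 : ℝ) < M := by positivity
  let cell : 𝓞 k → (k →+* ℂ) → ℤ := fun x φ => ⌊realCoord φ (x : k) / (τ φ / M)⌋
  have hmaps : ∀ x ∈ S, cell x ∈ Fintype.piFinset
      fun _ : k →+* ℂ => Finset.Icc (-(2 * M : ℤ)) (2 * M) := by
    intro x hx
    rw [Fintype.mem_piFinset]
    intro φ
    have hs : 0 < τ φ / M := div_pos (hτ φ) hM0
    have h1 : |realCoord φ (x : k)| ≤ 2 * τ φ :=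
      (abs_realCoord_le φ _).trans (by linarith [hS x hx φ])
    have h2 : |realCoord φ (x : k) / (τ φ / M)| ≤ 2 * M := by
      rw [abs_div, abs_of_pos hs, div_le_iff₀ hs]
      refine h1.trans (le_of_eq ?_)
      field_simp
    rw [abs_le] at h2
    rw [Finset.mem_Icc]
    constructor
    · rw [Int.le_floor]; push_cast; exact h2.1
    · have := (Int.floor_le (realCoord φ (x : k) / (τ φ / M))).trans h2.2
      exact_mod_cast this
  have hinj : Set.InjOn cell S := by
    intro x hx y hy hxy
    by_contra hne
    have hne' : x - y ≠ 0 := sub_ne_zero.2 hne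
    have hc : ∀ φ : k →+* ℂ, |realCoord φ ((x - y : 𝓞 k) : k)| < τ φ / M := by
      intro φ
      have hs : 0 < τ φ / M := div_pos (hτ φ) hM0
      have := Int.abs_sub_lt_one_of_floor_eq_floor (congrFun hxy φ)
      rw [← sub_div, abs_div, abs_of_pos hs, div_lt_one hs, ← realCoord_sub] at this
      simpa using this
    have hn : ∀ φ : k →+* ℂ, ‖φ ((x - y : 𝓞 k) : k)‖ < τ φ / M := by
      intro φ
      refine norm_lt_of_realCoord_lt (hc φ) ?_
      have := hc (ComplexEmbedding.conjugate φ)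
      rwa [hsym] at this
    have h1 := absNorm_le_absNorm_of_mem (J.sub_mem (hSJ x hx) (hSJ y hy)) hne'
    rw [absNorm_span_singleton_eq_prod] at h1
    have h2 : ∏ φ : k →+* ℂ, ‖φ ((x - y : 𝓞 k) : k)‖ < ∏ φ : k →+* ℂ, (τ φ / M) := by
      refine Finset.prod_lt_prod_of_nonempty ?_ (fun φ _ => hn φ) Finset.univ_nonempty
      intro φ _
      exact norm_pos_iff.2 ((map_ne_zero φ).2 (RingOfIntegers.coe_ne_zero_iff.2 hne'))
    rw [Finset.prod_div_distrib, Finset.prod_const, Finset.card_univ, ← hN] at h2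
    have h3 := h1.trans_lt h2
    rw [lt_div_iff₀ (by positivity)] at h3
    have h4 : (∏ φ, τ φ) = Q * J.absNorm := by rw [hQ]; field_simp
    have h5 : Q ≤ (M : ℝ) ^ N := by rw [← hqN]; gcongr
    nlinarith
  have hcard := Finset.card_le_card_of_injOn cell hmaps hinj
  rw [Fintype.card_piFinset] at hcard
  simp only [Int.card_Icc, Finset.prod_const, Finset.card_univ, ← hN] at hcard
  have h6 : (2 * (M : ℤ) + 1 - -(2 * M)).toNat = 4 * M + 1 := by omega
  rw [h6] at hcard
  have h7 : (S.card : ℝ) ≤ (4 * M + 1 : ℝ) ^ N := by exact_mod_cast hcard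
  refine h7.trans ?_
  rcases le_total q 1 with h | h
  · have : (4 * M + 1 : ℝ) ^ N ≤ 10 ^ N := by gcongr; linarith
    refine this.trans ?_
    have : (0 : ℝ) < 10 ^ N := by positivity
    nlinarith
  · have : (4 * M + 1 : ℝ) ^ N ≤ (10 * q) ^ N := by gcongr; linarith
    refine this.trans ?_
    rw [mul_pow, hqN]
    have : (0 : ℝ) < 10 ^ N := by positivity
    nlinarith

variable (k) in
/-- A bound for the house of combinations of the integral basis. -/
noncomputable def basisBound : ℝ := 1 + ∑ i, house (RingOfIntegers.basis k i : k)

theorem one_le_basisBound : 1 ≤ basisBound k := by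
  have : 0 ≤ ∑ i, house (RingOfIntegers.basis k i : k) := Finset.sum_nonneg fun i _ => house_nonneg _
  unfold basisBound; linarith

theorem house_sum_basis_le {α : Type*} [Fintype α] (a ω : α → k) {Y : ℝ}
    (h : ∀ i, house (a i) ≤ Y) : house (∑ i, a i * ω i) ≤ Y * ∑ i, house (ω i) := by
  refine (house_sum_le_sum_house _ _).trans ?_
  rw [Finset.mul_sum]
  exact Finset.sum_le_sum fun i _ => (house_mul_le _ _).trans
    (mul_le_mul_of_nonneg_right (h i) (house_nonneg _))

theorem house_ratCast (q : ℚ) : house (q : k) = |(q : ℝ)| := by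
  apply le_antisymm
  · rw [house_le_iff (abs_nonneg _)]
    intro φ; simp
  · obtain ⟨φ⟩ : Nonempty (k →+* ℂ) := inferInstance
    have := norm_embedding_le_house (q : k) φ
    simpa using this

theorem house_sum_int_basis_le (a : Module.Free.ChooseBasisIndex ℤ (𝓞 k) → ℤ) {Y : ℝ} (hY : 0 ≤ Y)
    (h : ∀ i, |(a i : ℝ)| ≤ Y) :
    house ((∑ i, a i • RingOfIntegers.basis k i : 𝓞 k) : k) ≤ Y * basisBound k := by
  have := house_sum_basis_le (fun i => (a i : k)) (fun i => (RingOfIntegers.basis k i : k)) (Y := Y)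
    (fun i => by rw [house_intCast]; exact_mod_cast h i)
  have h2 : ((∑ i, a i • RingOfIntegers.basis k i : 𝓞 k) : k)
      = ∑ i, (a i : k) * (RingOfIntegers.basis k i : k) := by
    simp [zsmul_eq_mul]
  rw [h2]
  refine this.trans ?_
  unfold basisBound
  nlinarith

variable (k) in
theorem exists_le_card_houseBall : ∃ c : ℝ, 0 < c ∧ ∀ X : ℝ, 0 ≤ X →
    c * X ^ Module.finrank ℚ k ≤ (houseBall k X).card := by
  classical
  have hW : 0 < basisBound k := by linarith [one_le_basisBound (k := k)]
  refine ⟨(1 / basisBound k) ^ Module.finrank ℚ k, by positivity, ?_⟩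
  intro X hX
  set A := ⌊X / basisBound k⌋₊ with hA
  let f : (Module.Free.ChooseBasisIndex ℤ (𝓞 k) → ℕ) → 𝓞 k :=
    fun a => ∑ i, (a i : ℤ) • RingOfIntegers.basis k i
  have hmaps : ∀ a ∈ Fintype.piFinset fun _ : Module.Free.ChooseBasisIndex ℤ (𝓞 k) =>
      Finset.range (A + 1), f a ∈ houseBall k X := by
    intro a ha
    rw [Fintype.mem_piFinset] at ha
    rw [mem_houseBall]
    refine (house_sum_int_basis_le (fun i => (a i : ℤ)) (Y := A) (by positivity) ?_).trans ?_
    · intro i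
      have := ha i
      rw [Finset.mem_range] at this
      have : a i ≤ A := by omega
      simpa using this
    · rw [← le_div_iff₀ hW]
      exact Nat.floor_le (by positivity)
  have hinj : Set.InjOn f (Fintype.piFinset fun _ : Module.Free.ChooseBasisIndex ℤ (𝓞 k) =>
      Finset.range (A + 1)) := by
    intro a _ b _ hab
    have := congrArg (RingOfIntegers.basis k).repr hab
    funext i
    have h := DFunLike.congr_fun this i
    simp only [f] at h
    rw [Module.Basis.repr_sum_self, Module.Basis.repr_sum_self] at h
    exact_mod_cast h
  have h := Finset.card_le_card_of_injOn f hmaps hinj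
  rw [Fintype.card_piFinset] at h
  simp only [Finset.card_range, Finset.prod_const, Finset.card_univ] at h
  rw [← Module.finrank_eq_card_chooseBasisIndex, RingOfIntegers.rank] at h
  have h2 : X / basisBound k ≤ A + 1 := (Nat.lt_floor_add_one _).le
  calc (1 / basisBound k) ^ Module.finrank ℚ k * X ^ Module.finrank ℚ k
      = (X / basisBound k) ^ Module.finrank ℚ k := by rw [← mul_pow]; congr 1; ring
    _ ≤ (A + 1 : ℝ) ^ Module.finrank ℚ k := by gcongr
    _ ≤ _ := by exact_mod_cast h

variable (k) in
theorem exists_card_le_ideal_ball : ∃ C : ℝ, 0 < C ∧ ∀ (J : Ideal (𝓞 k)) (_ : J ≠ ⊥) (X : ℝ)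
    (_ : 0 < X) (S : Finset (𝓞 k)) (_ : ∀ x ∈ S, x ∈ J) (_ : ∀ x ∈ S, house (x : k) ≤ X),
    (S.card : ℝ) ≤ C * (1 + X ^ Module.finrank ℚ k / J.absNorm) := by
  obtain ⟨C, hC, h⟩ := exists_card_le_of_box k
  refine ⟨C, hC, fun J hJ X hX S hSJ hS => ?_⟩
  have := h J hJ (fun _ => X) (fun _ => hX) (fun _ => rfl) S hSJ
    (fun x hx φ => (norm_embedding_le_house _ φ).trans (hS x hx))
  simpa [Embeddings.card] using this

variable (k) in
theorem exists_card_houseBall_le : ∃ C : ℝ, 0 < C ∧ ∀ X : ℝ, 1 ≤ X →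
    ((houseBall k X).card : ℝ) ≤ C * X ^ Module.finrank ℚ k := by
  obtain ⟨C, hC, h⟩ := exists_card_le_ideal_ball k
  refine ⟨2 * C, by positivity, fun X hX => ?_⟩
  have := h ⊤ (by simp) X (by linarith) (houseBall k X) (fun _ _ => trivial)
    (fun x hx => mem_houseBall.1 hx)
  have h1 : 1 ≤ X ^ Module.finrank ℚ k := one_le_pow₀ hX
  simp only [Ideal.absNorm_top, Nat.cast_one, div_one] at this
  nlinarith

theorem absNorm_pos_of_ne_bot {J : Ideal (𝓞 k)} (hJ : J ≠ ⊥) : (0 : ℝ) < J.absNorm := by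
  have : J.absNorm ≠ 0 := by simpa [Ideal.absNorm_eq_zero_iff] using hJ
  positivity

theorem absNorm_span_singleton_pos {x : 𝓞 k} (hx : x ≠ 0) :
    (0 : ℝ) < (Ideal.span {x}).absNorm :=
  absNorm_pos_of_ne_bot (by simpa using hx)

variable (k) in
/-- The dyadic estimate for the sum of inverse square roots of norms over an ideal. -/
theorem exists_sum_inv_sqrt_norm_le : ∃ C : ℝ, 0 < C ∧ ∀ (J : Ideal (𝓞 k)) (_ : J ≠ ⊥) (X : ℝ)
    (_ : 0 < X) (S : Finset (𝓞 k)) (_ : ∀ x ∈ S, x ∈ J) (_ : ∀ x ∈ S, x ≠ 0)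
    (_ : ∀ x ∈ S, house (x : k) ≤ X),
    ∑ x ∈ S, (1 / √((Ideal.span {x}).absNorm : ℝ)) ≤
      C * (√X ^ Module.finrank ℚ k / J.absNorm) := by
  classical
  obtain ⟨C, hC, hbox⟩ := exists_card_le_of_box k
  set N := Module.finrank ℚ k with hN
  have hcard : Fintype.card (k →+* ℂ) = N := Embeddings.card k ℂ
  set r : ℝ := 1 / √2 with hr
  have hr0 : 0 < r := by positivity
  have hr1 : r < 1 := by
    rw [hr, div_lt_one (by positivity)]
    exact Real.lt_sqrt_of_sq_lt (by norm_num)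
  refine ⟨2 * C * √2 ^ N * ((1 - r)⁻¹) ^ N, ?_, ?_⟩
  · have : 0 < 1 - r := by linarith
    positivity
  intro J hJ X hX S hSJ hS0 hS
  have hJ0 := absNorm_pos_of_ne_bot hJ
  have hnear : ∀ t : ℝ, ∃ n : ℕ, 1 ≤ t → (2 : ℝ) ^ n ≤ t ∧ t < 2 ^ (n + 1) := by
    intro t
    by_cases ht : 1 ≤ t
    · obtain ⟨n, hn⟩ := exists_nat_pow_near ht (by norm_num : (1 : ℝ) < 2)
      exact ⟨n, fun _ => hn⟩
    · exact ⟨0, fun h => absurd h ht⟩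
  choose f hf using hnear
  let e : 𝓞 k → (k →+* ℂ) → ℕ := fun x φ => f (X / ‖φ (x : k)‖)
  have hpos : ∀ x ∈ S, ∀ φ : k →+* ℂ, 0 < ‖φ (x : k)‖ := fun x hx φ =>
    norm_pos_iff.2 ((map_ne_zero φ).2 (RingOfIntegers.coe_ne_zero_iff.2 (hS0 x hx)))
  have he : ∀ x ∈ S, ∀ φ : k →+* ℂ, ‖φ (x : k)‖ ≤ X / 2 ^ e x φ ∧
      X / 2 ^ e x φ / 2 ≤ ‖φ (x : k)‖ := by
    intro x hx φ
    have h0 := hpos x hx φ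
    have h1 : 1 ≤ X / ‖φ (x : k)‖ := by
      rw [one_le_div h0]
      exact (norm_embedding_le_house _ φ).trans (hS x hx)
    obtain ⟨h2, h3⟩ := hf _ h1
    rw [le_div_iff₀ h0] at h2
    rw [div_lt_iff₀ h0, pow_succ] at h3
    constructor
    · rw [le_div_iff₀ (by positivity)]; linarith
    · rw [div_div, div_le_iff₀ (by positivity)]; linarith
  obtain ⟨E, hE⟩ : ∃ E : ℕ, ∀ x ∈ S, ∀ φ, e x φ < E := by
    refine ⟨(S.sup fun x => Finset.univ.sup fun φ => e x φ) + 1, fun x hx φ => ?_⟩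
    rw [Nat.lt_succ_iff]
    exact (Finset.le_sup (f := fun φ => e x φ) (Finset.mem_univ φ)).trans
      (Finset.le_sup (f := fun x => Finset.univ.sup fun φ => e x φ) hx)
  have hmaps : ∀ x ∈ S, e x ∈ Fintype.piFinset fun _ : k →+* ℂ => Finset.range E := by
    intro x hx
    rw [Fintype.mem_piFinset]
    exact fun φ => Finset.mem_range.2 (hE x hx φ)
  rw [← Finset.sum_fiberwise_of_maps_to hmaps]
  have hfib : ∀ ε ∈ Fintype.piFinset fun _ : k →+* ℂ => Finset.range E,
      ∑ x ∈ S with e x = ε, (1 / √((Ideal.span {x}).absNorm : ℝ)) ≤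
        2 * C * √2 ^ N * (√X ^ N / J.absNorm) * ∏ φ, r ^ ε φ := by
    intro ε _
    by_cases hne : (S.filter fun x => e x = ε).Nonempty
    · obtain ⟨y, hy⟩ := hne
      rw [Finset.mem_filter] at hy
      set P : ℝ := ∏ φ : k →+* ℂ, X / 2 ^ ε φ with hP
      have hP0 : 0 < P := Finset.prod_pos fun φ _ => by positivity
      have hmem : ∀ x ∈ S.filter (fun x => e x = ε), ∀ φ : k →+* ℂ, ‖φ (x : k)‖ ≤ X / 2 ^ ε φ ∧
          X / 2 ^ ε φ / 2 ≤ ‖φ (x : k)‖ := by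
        intro x hx φ
        rw [Finset.mem_filter] at hx
        rw [← hx.2]
        exact he x hx.1 φ
      have hJP : (J.absNorm : ℝ) ≤ P := by
        refine (absNorm_le_absNorm_of_mem (hSJ y hy.1) (hS0 y hy.1)).trans ?_
        rw [absNorm_span_singleton_eq_prod]
        exact Finset.prod_le_prod (fun _ _ => norm_nonneg _)
          fun φ _ => (hmem y (Finset.mem_filter.2 hy) φ).1
      have hc := hbox J hJ (fun φ => X / 2 ^ ε φ) (fun φ => by positivity)
        (fun φ => by
          have : ε (ComplexEmbedding.conjugate φ) = ε φ := by
            rw [← hy.2]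
            simp only [e]
            congr 2
            rw [ComplexEmbedding.conjugate_coe_eq, Complex.norm_conj]
          simp only [this])
        (S.filter fun x => e x = ε) (fun x hx => hSJ x (Finset.mem_filter.1 hx).1)
        (fun x hx φ => (hmem x hx φ).1)
      rw [← hP] at hc
      have hc' : ((S.filter fun x => e x = ε).card : ℝ) ≤ 2 * C * (P / J.absNorm) := by
        have : 1 ≤ P / J.absNorm := by rwa [one_le_div hJ0]
        nlinarith
      have hterm : ∀ x ∈ S.filter (fun x => e x = ε),
          1 / √((Ideal.span {x}).absNorm : ℝ) ≤ √2 ^ N / √P := by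
        intro x hx
        have h1 : P / 2 ^ N ≤ ((Ideal.span {x}).absNorm : ℝ) := by
          rw [absNorm_span_singleton_eq_prod]
          have : P / 2 ^ N = ∏ φ : k →+* ℂ, (X / 2 ^ ε φ / 2) := by
            rw [Finset.prod_div_distrib, Finset.prod_const, Finset.card_univ, hcard]
          rw [this]
          exact Finset.prod_le_prod (fun _ _ => by positivity) fun φ _ => (hmem x hx φ).2
        have h2 : √P / √2 ^ N ≤ √((Ideal.span {x}).absNorm : ℝ) := by
          have := Real.sqrt_le_sqrt h1
          rw [Real.sqrt_div hP0.le] at this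
          have h3 : √((2 : ℝ) ^ N) = √2 ^ N := Real.sqrt_eq_iff_mul_self_eq (by positivity) (by positivity) |>.2 (by
            rw [← mul_pow, Real.mul_self_sqrt (by norm_num)])
          rwa [h3] at this
        have h3 : 0 < √P := Real.sqrt_pos.2 hP0
        calc 1 / √((Ideal.span {x}).absNorm : ℝ) ≤ 1 / (√P / √2 ^ N) := by gcongr
          _ = √2 ^ N / √P := by rw [one_div_div]
      have hPs : P = √P * √P := (Real.mul_self_sqrt hP0.le).symm
      have hsP : √P = √X ^ N * ∏ φ, r ^ ε φ := by
        have : P = (√X ^ N * ∏ φ, r ^ ε φ) * (√X ^ N * ∏ φ, r ^ ε φ) := by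
          rw [← hcard, ← Finset.card_univ, ← Finset.prod_const, ← Finset.prod_mul_distrib,
            ← Finset.prod_mul_distrib, hP]
          refine Finset.prod_congr rfl fun φ _ => ?_
          have h1 : √X * √X = X := Real.mul_self_sqrt hX.le
          have h2 : r * r = 1 / 2 := by
            rw [hr, div_mul_div_comm, Real.mul_self_sqrt (by norm_num)]; norm_num
          calc X / 2 ^ ε φ = (√X * √X) * (r * r) ^ ε φ := by rw [h1, h2]; simp [div_eq_mul_inv]
            _ = _ := by rw [mul_pow]; ring
        rw [this, Real.sqrt_mul_self]
        have : 0 ≤ ∏ φ : k →+* ℂ, r ^ ε φ := Finset.prod_nonneg fun φ _ => by positivity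
        positivity
      have h3 : 0 < √P := Real.sqrt_pos.2 hP0
      calc ∑ x ∈ S with e x = ε, (1 / √((Ideal.span {x}).absNorm : ℝ))
          ≤ ∑ x ∈ S with e x = ε, √2 ^ N / √P := Finset.sum_le_sum hterm
        _ = ((S.filter fun x => e x = ε).card : ℝ) * (√2 ^ N / √P) := by
            rw [Finset.sum_const, nsmul_eq_mul]
        _ ≤ 2 * C * (P / J.absNorm) * (√2 ^ N / √P) := by gcongr
        _ = 2 * C * √2 ^ N * (√P / J.absNorm) := by
            nth_rw 1 [hPs]; field_simp
        _ = _ := by rw [hsP]; ring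
    · rw [Finset.not_nonempty_iff_eq_empty] at hne
      rw [hne, Finset.sum_empty]
      have : 0 ≤ ∏ φ : k →+* ℂ, r ^ ε φ := Finset.prod_nonneg fun φ _ => by positivity
      positivity
  refine (Finset.sum_le_sum hfib).trans ?_
  rw [← Finset.mul_sum, ← Finset.prod_univ_sum (fun _ : k →+* ℂ => Finset.range E) (fun _ i => r ^ i)]
  have hg : ∑ i ∈ Finset.range E, r ^ i ≤ (1 - r)⁻¹ := by
    have h1 := Summable.sum_le_tsum (Finset.range E) (fun i _ => by positivity)
      (summable_geometric_of_lt_one hr0.le hr1)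
    rwa [tsum_geometric_of_lt_one hr0.le hr1] at h1
  have hg' : ∏ _φ : k →+* ℂ, ∑ i ∈ Finset.range E, r ^ i ≤ ((1 - r)⁻¹) ^ N := by
    rw [Finset.prod_const, Finset.card_univ, hcard]
    gcongr
  calc _ ≤ 2 * C * √2 ^ N * (√X ^ N / J.absNorm) * ((1 - r)⁻¹) ^ N := by gcongr
    _ = _ := by ring

/-- Every residue class modulo `m ≠ 0` contains a representative of size comparable to `m`. -/
theorem exists_dvd_sub_house_le (m b : 𝓞 k) (hm : m ≠ 0) :
    ∃ x : 𝓞 k, m ∣ x - b ∧ house (x : k) ≤ basisBound k * house (m : k) := by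
  have hm' : (m : k) ≠ 0 := RingOfIntegers.coe_ne_zero_iff.2 hm
  set q := fun i => (integralBasis k).repr ((b : k) / m) i with hq
  have hsum : (b : k) / m = ∑ i, (q i : k) * (RingOfIntegers.basis k i : k) := by
    rw [← (integralBasis k).sum_repr ((b : k) / m)]
    refine Finset.sum_congr rfl fun i _ => ?_
    rw [integralBasis_apply, Algebra.smul_def]
    simp [hq]
  set y : 𝓞 k := ∑ i, ⌊q i⌋ • RingOfIntegers.basis k i with hy
  refine ⟨b - m * y, ⟨-y, by ring⟩, ?_⟩
  have h1 : ((b - m * y : 𝓞 k) : k) =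
      m * ∑ i, ((Int.fract (q i) : ℚ) : k) * (RingOfIntegers.basis k i : k) := by
    have h2 : (b : k) = m * ((b : k) / m) := by field_simp
    have h3 : (y : k) = ∑ i, (⌊q i⌋ : k) * (RingOfIntegers.basis k i : k) := by
      simp [hy, zsmul_eq_mul]
    have h4 : ((b - m * y : 𝓞 k) : k) = b - m * y := by simp
    rw [h4, h3, h2, hsum, ← mul_sub, ← Finset.sum_sub_distrib]
    congr 1
    refine Finset.sum_congr rfl fun i _ => ?_
    rw [← sub_mul]
    congr 1
    rw [Int.fract]; push_cast; ring
  rw [h1, mul_comm (basisBound k)]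
  refine (house_mul_le _ _).trans (mul_le_mul_of_nonneg_left ?_ (house_nonneg _))
  refine (house_sum_basis_le _ _ (Y := 1) fun i => ?_).trans ?_
  · rw [house_ratCast, abs_of_nonneg (by exact_mod_cast Int.fract_nonneg _)]
    exact_mod_cast (Int.fract_lt_one _).le
  · unfold basisBound; linarith

theorem exists_house_le_sub_mem (m₁ m₂ m₃ z : 𝓞 k) (h1 : m₁ ≠ 0)
    (hz : z ∈ Ideal.span {m₁, m₂, m₃}) :
    ∃ x y : 𝓞 k, house (x : k) ≤ basisBound k * house (m₁ : k) ∧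
      house (y : k) ≤ basisBound k * house (m₁ : k) ∧ m₁ ∣ m₂ * x + m₃ * y - z := by
  rw [Ideal.mem_span_insert] at hz
  obtain ⟨a, z', hz', rfl⟩ := hz
  rw [Ideal.mem_span_pair] at hz'
  obtain ⟨b, c, rfl⟩ := hz'
  obtain ⟨x, ⟨x', hx⟩, hx'⟩ := exists_dvd_sub_house_le m₁ b h1
  obtain ⟨y, ⟨y', hy⟩, hy'⟩ := exists_dvd_sub_house_le m₁ c h1
  refine ⟨x, y, hx', hy', m₂ * x' + m₃ * y' - a, ?_⟩
  have e1 : x = b + m₁ * x' := by rw [← hx]; ring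
  have e2 : y = c + m₁ * y' := by rw [← hy]; ring
  rw [e1, e2]; ring

/-- Representatives of the ideal `(m₁, m₂, m₃)` modulo `m₁`. -/
theorem exists_finset_reps (m₁ m₂ m₃ : 𝓞 k) (h1 : m₁ ≠ 0) :
    ∃ R : Finset (𝓞 k × 𝓞 k),
      (∀ p ∈ R, house (p.1 : k) ≤ basisBound k * house (m₁ : k) ∧
        house (p.2 : k) ≤ basisBound k * house (m₁ : k)) ∧
      (∀ p ∈ R, ∀ p' ∈ R, m₁ ∣ (m₂ * p.1 + m₃ * p.2) - (m₂ * p'.1 + m₃ * p'.2) → p = p') ∧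
      R.card * (Ideal.span {m₁, m₂, m₃}).absNorm = (Ideal.span {m₁}).absNorm := by
  classical
  set g : Ideal (𝓞 k) := Ideal.span {m₁, m₂, m₃} with hg
  set I : Ideal (𝓞 k) := Ideal.span {m₁} with hI
  have hIg : I ≤ g := by
    rw [hI, Ideal.span_singleton_le_iff_mem]
    exact Ideal.subset_span (by simp)
  have hcard := Submodule.card_quotient_mul_card_quotient g I hIg
  have hI0 : I ≠ ⊥ := by simpa [hI] using h1
  have : Finite (𝓞 k ⧸ I) := Ideal.finiteQuotientOfFreeOfNeBot I hI0
  have : Fintype (Submodule.map (Submodule.mkQ I) g) := Fintype.ofFinite _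
  have hex : ∀ c : Submodule.map (Submodule.mkQ I) g, ∃ p : 𝓞 k × 𝓞 k,
      house (p.1 : k) ≤ basisBound k * house (m₁ : k) ∧
      house (p.2 : k) ≤ basisBound k * house (m₁ : k) ∧
      Submodule.mkQ I (m₂ * p.1 + m₃ * p.2) = c := by
    rintro ⟨c, hc⟩
    obtain ⟨z, hz, rfl⟩ := hc
    obtain ⟨x, y, hx, hy, hd⟩ := exists_house_le_sub_mem m₁ m₂ m₃ z h1 hz
    refine ⟨(x, y), hx, hy, ?_⟩
    simp only [Submodule.mkQ_apply]
    rw [Submodule.Quotient.eq, hI, Ideal.mem_span_singleton]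
    exact hd
  choose f hf1 hf2 hf3 using hex
  have hinj : Function.Injective f := by
    intro c c' h
    apply Subtype.ext
    rw [← hf3 c, ← hf3 c', h]
  refine ⟨Finset.univ.image f, ?_, ?_, ?_⟩
  · intro p hp
    obtain ⟨c, _, rfl⟩ := Finset.mem_image.1 hp
    exact ⟨hf1 c, hf2 c⟩
  · intro p hp p' hp' hd
    obtain ⟨c, _, rfl⟩ := Finset.mem_image.1 hp
    obtain ⟨c', _, rfl⟩ := Finset.mem_image.1 hp'
    congr 1
    apply Subtype.ext
    rw [← hf3 c, ← hf3 c']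
    simp only [Submodule.mkQ_apply]
    rw [Submodule.Quotient.eq, hI, Ideal.mem_span_singleton]
    exact hd
  · rw [Finset.card_image_of_injective _ hinj, Finset.card_univ, ← Nat.card_eq_fintype_card]
    rw [Ideal.absNorm_apply, Ideal.absNorm_apply, Submodule.cardQuot_apply, Submodule.cardQuot_apply]
    exact hcard

variable (k) in
theorem exists_card_ker_le : ∃ C : ℝ, 0 < C ∧ ∀ (X : ℝ) (_ : 1 ≤ X) (m₁ m₂ m₃ : 𝓞 k)
    (_ : m₁ ≠ 0) (_ : house (m₁ : k) ≤ X) (S : Finset (𝓞 k × 𝓞 k × 𝓞 k))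
    (_ : ∀ κ ∈ S, house (κ.1 : k) ≤ X ∧ house (κ.2.1 : k) ≤ X ∧ house (κ.2.2 : k) ≤ X)
    (_ : ∀ κ ∈ S, m₁ * κ.1 + m₂ * κ.2.1 + m₃ * κ.2.2 = 0),
    (S.card : ℝ) ≤ C * ((X ^ Module.finrank ℚ k) ^ 2 * (Ideal.span {m₁, m₂, m₃}).absNorm /
      (Ideal.span {m₁}).absNorm) := by
  classical
  obtain ⟨c, hc, hlow⟩ := exists_le_card_houseBall k
  obtain ⟨C, hC, hup⟩ := exists_card_houseBall_le k
  set N := Module.finrank ℚ k with hN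
  set W := 1 + basisBound k with hW
  have hb1 := one_le_basisBound (k := k)
  refine ⟨(C * W ^ N) ^ 3 / c, by positivity, ?_⟩
  intro X hX m₁ m₂ m₃ h1 hm1 S hS hker
  obtain ⟨R, hR1, hR2, hR3⟩ := exists_finset_reps m₁ m₂ m₃ h1
  set B := houseBall k (W * X) with hB
  have hWX : W * X = X + basisBound k * X := by rw [hW]; ring
  have hbX : basisBound k * house (m₁ : k) ≤ basisBound k * X := by gcongr
  have hadd : ∀ x y : 𝓞 k, house (x : k) ≤ X → house (y : k) ≤ basisBound k * X → x + y ∈ B := by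
    intro x y hx hy
    rw [hB, mem_houseBall, hWX]
    have : ((x + y : 𝓞 k) : k) = x + y := by simp
    rw [this]
    exact (house_add_le _ _).trans (add_le_add hx hy)
  let f : (𝓞 k × 𝓞 k × 𝓞 k) × 𝓞 k × (𝓞 k × 𝓞 k) → 𝓞 k × 𝓞 k × 𝓞 k :=
    fun p => (p.1.1 + p.2.1, p.1.2.1 + p.2.2.1, p.1.2.2 + p.2.2.2)
  have hmaps : ∀ p ∈ S ×ˢ houseBall k X ×ˢ R, f p ∈ B ×ˢ B ×ˢ B := by
    rintro ⟨κ, j, p⟩ h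
    simp only [Finset.mem_product] at h ⊢
    obtain ⟨hκ, hj, hp⟩ := h
    rw [mem_houseBall] at hj
    refine ⟨hadd _ _ (hS κ hκ).1 (hj.trans (by nlinarith)),
      hadd _ _ (hS κ hκ).2.1 ((hR1 p hp).1.trans hbX),
      hadd _ _ (hS κ hκ).2.2 ((hR1 p hp).2.trans hbX)⟩
  have hinj : Set.InjOn f (S ×ˢ houseBall k X ×ˢ R : Finset _) := by
    rintro ⟨⟨x, y, z⟩, j, p⟩ h ⟨⟨x', y', z'⟩, j', p'⟩ h' hff
    simp only [Finset.coe_product, Set.mem_prod, Finset.mem_coe] at h h'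
    simp only [f, Prod.mk.injEq] at hff
    obtain ⟨e1, e2, e3⟩ := hff
    have k1 := hker _ h.1
    have k2 := hker _ h'.1
    simp only at k1 k2
    have hpp : p = p' := by
      refine hR2 p h.2.2 p' h'.2.2 ⟨j' - j, ?_⟩
      linear_combination m₁ * e1 + m₂ * e2 + m₃ * e3 - k1 + k2
    subst hpp
    have e2' : y = y' := add_right_cancel e2
    have e3' : z = z' := add_right_cancel e3
    subst e2' e3'
    have e4 : x = x' := by
      have : m₁ * (x - x') = 0 := by linear_combination k1 - k2
      rcases mul_eq_zero.1 this with h | h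
      · exact absurd h h1
      · exact sub_eq_zero.1 h
    subst e4
    have e1' : j = j' := add_left_cancel e1
    rw [e1']
  have hcard := Finset.card_le_card_of_injOn f hmaps hinj
  simp only [Finset.card_product] at hcard
  have hcard' : (S.card : ℝ) * ((houseBall k X).card * R.card) ≤ B.card * (B.card * B.card) := by
    exact_mod_cast hcard
  have hBle : (B.card : ℝ) ≤ C * W ^ N * X ^ N := by
    rw [mul_assoc, ← mul_pow]
    exact hup _ (by nlinarith)
  have hlo := hlow X (by linarith)
  have hg0 : (0 : ℝ) < (Ideal.span {m₁, m₂, m₃}).absNorm := by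
    refine absNorm_pos_of_ne_bot fun h => h1 ?_
    have : m₁ ∈ Ideal.span {m₁, m₂, m₃} := Ideal.subset_span (by simp)
    rwa [h] at this
  have hm0 := absNorm_span_singleton_pos h1
  have hR3' : (R.card : ℝ) * (Ideal.span {m₁, m₂, m₃}).absNorm = (Ideal.span {m₁}).absNorm := by
    exact_mod_cast hR3
  set A : ℝ := ((Ideal.span {m₁, m₂, m₃}).absNorm : ℝ)
  set D : ℝ := ((Ideal.span {m₁}).absNorm : ℝ)
  have hRc : (R.card : ℝ) = D / A := by field_simp; exact hR3'
  have hXN : 0 < X ^ N := by positivity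
  have key : (S.card : ℝ) * (c * X ^ N * (D / A)) ≤ (C * W ^ N * X ^ N) ^ 3 := by
    calc (S.card : ℝ) * (c * X ^ N * (D / A)) ≤ S.card * ((houseBall k X).card * R.card) := by
          rw [hRc]; gcongr
      _ ≤ B.card * (B.card * B.card) := hcard'
      _ = (B.card : ℝ) ^ 3 := by ring
      _ ≤ _ := by gcongr
  rw [← le_div_iff₀ (by positivity)] at key
  refine key.trans (le_of_eq ?_)
  field_simp

variable (k) in
theorem exists_card_ideals_le : ∃ C : ℝ, 0 < C ∧ ∀ (Y : ℝ) (_ : 1 ≤ Y) (G : Finset (Ideal (𝓞 k)))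
    (_ : ∀ g ∈ G, g ≠ ⊥) (_ : ∀ g ∈ G, (g.absNorm : ℝ) ≤ Y), (G.card : ℝ) ≤ C * Y := by
  classical
  have h := NumberField.Ideal.tendsto_norm_le_div_atTop₀ k
  obtain ⟨C₀, hC₀⟩ : ∃ C₀ : ℝ, ∀ᶠ s : ℝ in Filter.atTop,
      (Nat.card {I : nonZeroDivisors (Ideal (𝓞 k)) // (Ideal.absNorm (I : Ideal (𝓞 k)) : ℝ) ≤ s} : ℝ) / s ≤ C₀ :=
    ⟨_, h.eventually_le_const (lt_add_one _)⟩
  obtain ⟨Y₀, hY₀⟩ := Filter.eventually_atTop.1 hC₀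
  set D := max Y₀ 1 with hD
  have hD1 : 1 ≤ D := le_max_right _ _
  refine ⟨max C₀ 1 * D, by positivity, ?_⟩
  intro Y hY G hG0 hG
  have hYD : Y₀ ≤ D * Y := by
    have : Y₀ ≤ D := le_max_left _ _
    nlinarith
  have h1 := hY₀ _ hYD
  rw [div_le_iff₀ (by positivity)] at h1
  have hfin : Finite {I : nonZeroDivisors (Ideal (𝓞 k)) // (Ideal.absNorm (I : Ideal (𝓞 k)) : ℝ) ≤ D * Y} := by
    have := Ideal.finite_setOfPred_absNorm_le₀ (S := 𝓞 k) ⌊D * Y⌋₊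
    refine (this.subset ?_).to_subtype
    intro I hI
    exact Nat.le_floor hI
  have h2 : G.card ≤ Nat.card {I : nonZeroDivisors (Ideal (𝓞 k)) // (Ideal.absNorm (I : Ideal (𝓞 k)) : ℝ) ≤ D * Y} := by
    have : G.card = Nat.card G := by simp
    rw [this]
    refine Nat.card_le_card_of_injective
      (fun g : G => ⟨⟨g.1, mem_nonZeroDivisors_of_ne_zero (hG0 g.1 g.2)⟩,
        (hG g.1 g.2).trans (by nlinarith)⟩) ?_
    intro a b hab
    simp only [Subtype.mk.injEq] at hab
    exact Subtype.ext hab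
  have h3 : (G.card : ℝ) ≤ C₀ * (D * Y) := le_trans (by exact_mod_cast h2) h1
  refine h3.trans ?_
  rw [mul_assoc]
  gcongr
  exact le_max_left _ _

variable (k) in
theorem exists_sum_inv_sq_absNorm_le : ∃ C : ℝ, 0 < C ∧ ∀ (G : Finset (Ideal (𝓞 k)))
    (_ : ∀ g ∈ G, g ≠ ⊥), ∑ g ∈ G, (1 / (g.absNorm : ℝ) ^ 2) ≤ C := by
  classical
  obtain ⟨C, hC, h⟩ := exists_card_ideals_le k
  refine ⟨4 * C, by positivity, ?_⟩
  intro G hG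
  obtain ⟨E, hE⟩ : ∃ E : ℕ, ∀ g ∈ G, Nat.log 2 g.absNorm ∈ Finset.range E :=
    ⟨(G.sup fun g => Nat.log 2 g.absNorm) + 1, fun g hg => Finset.mem_range.2
      (Nat.lt_succ_of_le (Finset.le_sup (f := fun g : Ideal (𝓞 k) => Nat.log 2 g.absNorm) hg))⟩
  rw [← Finset.sum_fiberwise_of_maps_to hE]
  have hfib : ∀ e ∈ Finset.range E, ∑ g ∈ G with Nat.log 2 g.absNorm = e,
      (1 / (g.absNorm : ℝ) ^ 2) ≤ 2 * C * (1 / 2) ^ e := by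
    intro e _
    have hb : ∀ g ∈ G.filter (fun g => Nat.log 2 g.absNorm = e),
        (2 : ℝ) ^ e ≤ g.absNorm ∧ (g.absNorm : ℝ) ≤ 2 ^ (e + 1) := by
      intro g hg
      rw [Finset.mem_filter] at hg
      have h0 : g.absNorm ≠ 0 := by simpa [Ideal.absNorm_eq_zero_iff] using hG g hg.1
      have h1 := Nat.pow_log_le_self 2 h0
      have h2 := Nat.lt_pow_succ_log_self (by norm_num : 1 < 2) g.absNorm
      rw [hg.2] at h1 h2
      exact ⟨by exact_mod_cast h1, by exact_mod_cast h2.le⟩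
    have hc := h (2 ^ (e + 1)) (one_le_pow₀ (by norm_num)) (G.filter (fun g => Nat.log 2 g.absNorm = e))
      (fun g hg => hG g (Finset.mem_filter.1 hg).1) (fun g hg => (hb g hg).2)
    calc _ ≤ ∑ g ∈ G with Nat.log 2 g.absNorm = e, (1 / ((2 : ℝ) ^ e) ^ 2) := by
          refine Finset.sum_le_sum fun g hg => ?_
          have := (hb g hg).1
          gcongr
      _ = ((G.filter (fun g => Nat.log 2 g.absNorm = e)).card : ℝ) * (1 / ((2 : ℝ) ^ e) ^ 2) := by
          rw [Finset.sum_const, nsmul_eq_mul]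
      _ ≤ C * 2 ^ (e + 1) * (1 / ((2 : ℝ) ^ e) ^ 2) := by gcongr
      _ = _ := by
          rw [pow_succ, one_div_pow]; field_simp
  refine (Finset.sum_le_sum hfib).trans ?_
  rw [← Finset.mul_sum]
  have h1 := Summable.sum_le_tsum (Finset.range E) (fun i _ => by positivity)
      (summable_geometric_of_lt_one (by norm_num : (0 : ℝ) ≤ 1 / 2) (by norm_num))
  rw [tsum_geometric_of_lt_one (by norm_num) (by norm_num)] at h1
  calc _ ≤ 2 * C * (1 - 1 / 2)⁻¹ := by gcongr
    _ = 4 * C := by norm_num; ring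

/-- The weight `|N(x)|^{-1/2}`, with value `1` at `0`. -/
noncomputable def invSqrtNorm (x : 𝓞 k) : ℝ :=
  open Classical in if x = 0 then 1 else 1 / √((Ideal.span {x}).absNorm : ℝ)

theorem invSqrtNorm_pos (x : 𝓞 k) : 0 < invSqrtNorm x := by
  unfold invSqrtNorm
  split_ifs with h
  · exact one_pos
  · have := absNorm_span_singleton_pos h
    positivity

theorem one_le_absNorm_span_singleton {x : 𝓞 k} (hx : x ≠ 0) :
    (1 : ℝ) ≤ (Ideal.span {x}).absNorm := by
  have := absNorm_span_singleton_pos hx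
  exact_mod_cast this

theorem inv_absNorm_le_invSqrtNorm {x : 𝓞 k} (hx : x ≠ 0) :
    1 / ((Ideal.span {x}).absNorm : ℝ) ≤ invSqrtNorm x := by
  have h1 := one_le_absNorm_span_singleton hx
  rw [invSqrtNorm, if_neg hx]
  have h2 : √((Ideal.span {x}).absNorm : ℝ) ≤ (Ideal.span {x}).absNorm :=
    Real.sqrt_le_left (by linarith) |>.2 (by nlinarith)
  have : 0 < √((Ideal.span {x}).absNorm : ℝ) := Real.sqrt_pos.2 (by linarith)
  gcongr

variable (k) in
theorem exists_card_ker_le_weight : ∃ C : ℝ, 0 < C ∧ ∀ (X : ℝ) (_ : 1 ≤ X) (m₁ m₂ m₃ : 𝓞 k)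
    (_ : ¬ (m₁ = 0 ∧ m₂ = 0)) (_ : house (m₁ : k) ≤ X) (_ : house (m₂ : k) ≤ X)
    (S : Finset (𝓞 k × 𝓞 k × 𝓞 k))
    (_ : ∀ κ ∈ S, house (κ.1 : k) ≤ X ∧ house (κ.2.1 : k) ≤ X ∧ house (κ.2.2 : k) ≤ X)
    (_ : ∀ κ ∈ S, m₁ * κ.1 + m₂ * κ.2.1 + m₃ * κ.2.2 = 0),
    (S.card : ℝ) ≤ C * (X ^ Module.finrank ℚ k) ^ 2 *
      ((Ideal.span {m₁, m₂, m₃}).absNorm * (invSqrtNorm m₁ * invSqrtNorm m₂)) := by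
  classical
  obtain ⟨C, hC, h⟩ := exists_card_ker_le k
  refine ⟨C, hC, ?_⟩
  intro X hX m₁ m₂ m₃ h0 h1 h2 S hS hker
  set V := X ^ Module.finrank ℚ k with hV
  have hV0 : 0 < V := by positivity
  have b1 : m₁ ≠ 0 → (S.card : ℝ) ≤ C * V ^ 2 * (Ideal.span {m₁, m₂, m₃}).absNorm *
      (1 / (Ideal.span {m₁}).absNorm) := by
    intro hm
    refine (h X hX m₁ m₂ m₃ hm h1 S hS hker).trans (le_of_eq ?_)
    ring
  have b2 : m₂ ≠ 0 → (S.card : ℝ) ≤ C * V ^ 2 * (Ideal.span {m₁, m₂, m₃}).absNorm *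
      (1 / (Ideal.span {m₂}).absNorm) := by
    intro hm
    have hsw : Function.Injective (fun κ : 𝓞 k × 𝓞 k × 𝓞 k => (κ.2.1, κ.1, κ.2.2)) := by
      rintro ⟨a, b, c⟩ ⟨a', b', c'⟩ hh
      simp only [Prod.mk.injEq] at hh ⊢
      tauto
    have := h X hX m₂ m₁ m₃ hm h2 (S.image fun κ => (κ.2.1, κ.1, κ.2.2)) (by
        intro κ hκ
        obtain ⟨κ', hκ', rfl⟩ := Finset.mem_image.1 hκ
        exact ⟨(hS κ' hκ').2.1, (hS κ' hκ').1, (hS κ' hκ').2.2⟩) (by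
        intro κ hκ
        obtain ⟨κ', hκ', rfl⟩ := Finset.mem_image.1 hκ
        simp only
        linear_combination hker κ' hκ')
    rw [Finset.card_image_of_injective _ hsw] at this
    have hset : ({m₂, m₁, m₃} : Set (𝓞 k)) = {m₁, m₂, m₃} := Set.insert_comm _ _ _
    rw [hset] at this
    refine this.trans (le_of_eq ?_)
    ring
  set A : ℝ := C * V ^ 2 * (Ideal.span {m₁, m₂, m₃}).absNorm with hA
  have hA0 : 0 ≤ A := by positivity
  suffices (S.card : ℝ) ≤ A * (invSqrtNorm m₁ * invSqrtNorm m₂) by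
    refine this.trans (le_of_eq ?_)
    rw [hA]; ring
  by_cases e1 : m₁ = 0
  · have e2 : m₂ ≠ 0 := fun e => h0 ⟨e1, e⟩
    have : invSqrtNorm m₁ = 1 := by simp [invSqrtNorm, e1]
    rw [this, one_mul]
    exact (b2 e2).trans (mul_le_mul_of_nonneg_left (inv_absNorm_le_invSqrtNorm e2) hA0)
  by_cases e2 : m₂ = 0
  · have : invSqrtNorm m₂ = 1 := by simp [invSqrtNorm, e2]
    rw [this, mul_one]
    exact (b1 e1).trans (mul_le_mul_of_nonneg_left (inv_absNorm_le_invSqrtNorm e1) hA0)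
  rw [invSqrtNorm, invSqrtNorm, if_neg e1, if_neg e2]
  have p1 := absNorm_span_singleton_pos e1
  have p2 := absNorm_span_singleton_pos e2
  have hh1 := b1 e1
  have hh2 := b2 e2
  set n₁ : ℝ := ((Ideal.span {m₁}).absNorm : ℝ)
  set n₂ : ℝ := ((Ideal.span {m₂}).absNorm : ℝ)
  have hs : (S.card : ℝ) * S.card ≤ A * (1 / n₁) * (A * (1 / n₂)) :=
    mul_le_mul hh1 hh2 (by positivity) (by positivity)
  rw [← pow_le_pow_iff_left₀ (by positivity) (by positivity) two_ne_zero]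
  have s1 : √n₁ ^ 2 = n₁ := Real.sq_sqrt p1.le
  have s2 : √n₂ ^ 2 = n₂ := Real.sq_sqrt p2.le
  have s3 : (A * (1 / √n₁ * (1 / √n₂))) ^ 2 = A ^ 2 * (1 / √n₁ ^ 2 * (1 / √n₂ ^ 2)) := by ring
  rw [s3, s1, s2, sq]
  refine hs.trans (le_of_eq ?_)
  ring

theorem absNorm_span_singleton_le_pow {x : 𝓞 k} {X : ℝ} (hx : house (x : k) ≤ X) :
    ((Ideal.span {x}).absNorm : ℝ) ≤ X ^ Module.finrank ℚ k := by
  rw [absNorm_span_singleton_eq_prod, ← Embeddings.card k ℂ, ← Finset.card_univ, ← Finset.prod_const]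
  exact Finset.prod_le_prod (fun _ _ => norm_nonneg _)
    fun φ _ => (norm_embedding_le_house _ φ).trans hx

variable (k) in
theorem exists_sum_weight_le : ∃ C : ℝ, 0 < C ∧ ∀ (X : ℝ) (_ : 1 ≤ X) (g : Ideal (𝓞 k))
    (_ : g ≠ ⊥) (_ : (g.absNorm : ℝ) ≤ X ^ Module.finrank ℚ k) (S : Finset (𝓞 k × 𝓞 k × 𝓞 k))
    (_ : ∀ m ∈ S, (m.1 ∈ g ∧ m.2.1 ∈ g ∧ m.2.2 ∈ g) ∧
      house (m.1 : k) ≤ X ∧ house (m.2.1 : k) ≤ X ∧ house (m.2.2 : k) ≤ X),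
    ∑ m ∈ S, g.absNorm * (invSqrtNorm m.1 * invSqrtNorm m.2.1) ≤
      C * X ^ Module.finrank ℚ k * (1 + X ^ Module.finrank ℚ k * (1 / (g.absNorm : ℝ) ^ 2)) := by
  classical
  obtain ⟨C₁, hC₁, h₁⟩ := exists_card_le_ideal_ball k
  obtain ⟨C₂, hC₂, h₂⟩ := exists_sum_inv_sqrt_norm_le k
  set N := Module.finrank ℚ k with hN
  refine ⟨4 * C₁ * (1 + C₂ ^ 2), by positivity, ?_⟩
  intro X hX g hg hgX S hS
  have hX0 : 0 < X := by linarith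
  set V := X ^ N with hV
  have hV0 : 0 < V := by positivity
  have hg0 := absNorm_pos_of_ne_bot hg
  set n : ℝ := (g.absNorm : ℝ) with hn
  set T := (houseBall k X).filter (fun x => x ∈ g) with hT
  have hTm : ∀ x ∈ T, x ∈ g ∧ house (x : k) ≤ X := by
    intro x hx
    rw [hT, Finset.mem_filter, mem_houseBall] at hx
    exact ⟨hx.2, hx.1⟩
  have hsub : S ⊆ T ×ˢ T ×ˢ T := by
    intro m hm
    obtain ⟨⟨a1, a2, a3⟩, b1, b2, b3⟩ := hS m hm
    simp only [Finset.mem_product, hT, Finset.mem_filter, mem_houseBall]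
    exact ⟨⟨b1, a1⟩, ⟨b2, a2⟩, ⟨b3, a3⟩⟩
  have hsum : ∑ x ∈ T, invSqrtNorm x ≤ 1 + C₂ * (√X ^ N / n) := by
    have h0 := h₂ g hg X hX0 (T.filter (fun x => x ≠ 0))
      (fun x hx => (hTm x (Finset.mem_filter.1 hx).1).1) (fun x hx => (Finset.mem_filter.1 hx).2)
      (fun x hx => (hTm x (Finset.mem_filter.1 hx).1).2)
    rw [← Finset.sum_filter_add_sum_filter_not T (fun x => x = 0)]
    refine add_le_add ?_ ?_
    · calc ∑ x ∈ T with x = 0, invSqrtNorm x ≤ ∑ x ∈ ({0} : Finset (𝓞 k)), invSqrtNorm x := by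
            refine Finset.sum_le_sum_of_subset_of_nonneg ?_ fun x _ _ => (invSqrtNorm_pos x).le
            intro x hx
            simpa using (Finset.mem_filter.1 hx).2
        _ = 1 := by simp [invSqrtNorm]
    · refine le_trans (le_of_eq (Finset.sum_congr rfl fun x hx => ?_)) h0
      rw [invSqrtNorm, if_neg (Finset.mem_filter.1 hx).2]
  have hcard : (T.card : ℝ) ≤ 2 * C₁ * (V / n) := by
    have := h₁ g hg X hX0 T (fun x hx => (hTm x hx).1) (fun x hx => (hTm x hx).2)
    have h1 : 1 ≤ V / n := by rwa [one_le_div hg0]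
    nlinarith
  have hsq : (√X ^ N) ^ 2 = V := by
    rw [← pow_mul, mul_comm N 2, pow_mul, Real.sq_sqrt hX0.le]
  have hs0 : 0 ≤ ∑ x ∈ T, invSqrtNorm x := Finset.sum_nonneg fun x _ => (invSqrtNorm_pos x).le
  calc ∑ m ∈ S, n * (invSqrtNorm m.1 * invSqrtNorm m.2.1)
      ≤ ∑ m ∈ T ×ˢ T ×ˢ T, n * (invSqrtNorm m.1 * invSqrtNorm m.2.1) :=
        Finset.sum_le_sum_of_subset_of_nonneg hsub fun m _ _ =>
          mul_nonneg hg0.le (mul_pos (invSqrtNorm_pos _) (invSqrtNorm_pos _)).le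
    _ = n * ((∑ x ∈ T, invSqrtNorm x) ^ 2 * T.card) := by
        rw [← Finset.mul_sum, Finset.sum_product, sq, Finset.sum_mul_sum, Finset.sum_mul]
        congr 1
        refine Finset.sum_congr rfl fun x _ => ?_
        rw [Finset.sum_product, Finset.sum_mul]
        refine Finset.sum_congr rfl fun y _ => ?_
        simp only [Finset.sum_const, nsmul_eq_mul]
        ring
    _ ≤ n * ((1 + C₂ * (√X ^ N / n)) ^ 2 * (2 * C₁ * (V / n))) := by gcongr
    _ = 2 * C₁ * V * (1 + C₂ * (√X ^ N / n)) ^ 2 := by field_simp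
    _ ≤ 2 * C₁ * V * (2 * (1 + C₂ ^ 2 * (V * (1 / n ^ 2)))) := by
        refine mul_le_mul_of_nonneg_left ?_ (by positivity)
        have : C₂ ^ 2 * (V * (1 / n ^ 2)) = (C₂ * (√X ^ N / n)) ^ 2 := by rw [← hsq]; ring
        rw [this]
        nlinarith [sq_nonneg (1 - C₂ * (√X ^ N / n))]
    _ ≤ 4 * C₁ * (1 + C₂ ^ 2) * V * (1 + V * (1 / n ^ 2)) := by
        have h1 : 0 ≤ V * (1 / n ^ 2) := by positivity
        have h2 : 1 + C₂ ^ 2 * (V * (1 / n ^ 2)) ≤ (1 + C₂ ^ 2) * (1 + V * (1 / n ^ 2)) := by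
          nlinarith [sq_nonneg C₂]
        have h3 : 0 ≤ 4 * C₁ * V := by positivity
        nlinarith [mul_le_mul_of_nonneg_left h2 h3]

variable (k) in
/-- The number of bounded solutions of `m₁κ₁ + m₂κ₂ + m₃κ₃ = 0`. -/
theorem exists_card_bilinear_le : ∃ C : ℝ, 0 < C ∧ ∀ (X : ℝ) (_ : 1 ≤ X)
    (S : Finset ((𝓞 k × 𝓞 k × 𝓞 k) × (𝓞 k × 𝓞 k × 𝓞 k)))
    (_ : ∀ p ∈ S, (house (p.1.1 : k) ≤ X ∧ house (p.1.2.1 : k) ≤ X ∧ house (p.1.2.2 : k) ≤ X) ∧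
      (house (p.2.1 : k) ≤ X ∧ house (p.2.2.1 : k) ≤ X ∧ house (p.2.2.2 : k) ≤ X))
    (_ : ∀ p ∈ S, p.1.1 * p.2.1 + p.1.2.1 * p.2.2.1 + p.1.2.2 * p.2.2.2 = 0),
    (S.card : ℝ) ≤ C * (X ^ Module.finrank ℚ k) ^ 4 := by
  classical
  obtain ⟨C₁, hC₁, h₁⟩ := exists_card_houseBall_le k
  obtain ⟨C₂, hC₂, h₂⟩ := exists_card_ker_le_weight k
  obtain ⟨C₃, hC₃, h₃⟩ := exists_sum_weight_le k
  obtain ⟨C₄, hC₄, h₄⟩ := exists_card_ideals_le k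
  obtain ⟨C₅, hC₅, h₅⟩ := exists_sum_inv_sq_absNorm_le k
  refine ⟨C₁ ^ 4 + C₂ * (C₃ * (C₄ + C₅)), by positivity, ?_⟩
  intro X hX S hS hker
  set V := X ^ Module.finrank ℚ k with hV
  have hV1 : 1 ≤ V := one_le_pow₀ hX
  have hV0 : 0 < V := by positivity
  set S₀ := S.filter (fun p => p.1.1 = 0 ∧ p.1.2.1 = 0) with hS₀
  set S₁ := S.filter (fun p => ¬ (p.1.1 = 0 ∧ p.1.2.1 = 0)) with hS₁
  have hsplit : S.card = S₀.card + S₁.card := (Finset.card_filter_add_card_filter_not _).symm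
  have b0 : (S₀.card : ℝ) ≤ C₁ ^ 4 * V ^ 4 := by
    set B := houseBall k X
    have hc : S₀.card ≤ (B ×ˢ B ×ˢ B ×ˢ B).card := by
      refine Finset.card_le_card_of_injOn (fun p => (p.1.2.2, p.2.1, p.2.2.1, p.2.2.2)) ?_ ?_
      · intro p hp
        have := hS p (Finset.mem_filter.1 hp).1
        simp only [Finset.coe_product, Set.mem_prod, Finset.mem_coe, B, mem_houseBall]
        tauto
      · rintro ⟨⟨a, b, c⟩, d, e, f⟩ hp ⟨⟨a', b', c'⟩, d', e', f'⟩ hp' hh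
        have q := (Finset.mem_filter.1 hp).2
        have q' := (Finset.mem_filter.1 hp').2
        simp only [Prod.mk.injEq] at hh q q' ⊢
        obtain ⟨r1, r2, r3, r4⟩ := hh
        refine ⟨⟨?_, ?_, r1⟩, r2, r3, r4⟩
        · rw [q.1, q'.1]
        · rw [q.2, q'.2]
    simp only [Finset.card_product] at hc
    have hc' : (S₀.card : ℝ) ≤ (B.card : ℝ) ^ 4 := by
      have : (S₀.card : ℝ) ≤ B.card * (B.card * (B.card * B.card)) := by exact_mod_cast hc
      refine this.trans (le_of_eq (by ring))
    refine hc'.trans ?_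
    rw [← mul_pow]
    have := h₁ X hX
    gcongr
  set M := S₁.image Prod.fst with hM
  have hMm : ∀ m ∈ M, ¬ (m.1 = 0 ∧ m.2.1 = 0) ∧
      house (m.1 : k) ≤ X ∧ house (m.2.1 : k) ≤ X ∧ house (m.2.2 : k) ≤ X := by
    intro m hm
    obtain ⟨p, hp, rfl⟩ := Finset.mem_image.1 hm
    rw [hS₁, Finset.mem_filter] at hp
    exact ⟨hp.2, (hS p hp.1).1⟩
  let I : 𝓞 k × 𝓞 k × 𝓞 k → Ideal (𝓞 k) := fun m => Ideal.span {m.1, m.2.1, m.2.2}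
  have hI : ∀ m, m.1 ∈ I m ∧ m.2.1 ∈ I m ∧ m.2.2 ∈ I m := fun m =>
    ⟨Ideal.subset_span (by simp), Ideal.subset_span (by simp), Ideal.subset_span (by simp)⟩
  have hIM : ∀ m ∈ M, I m ≠ ⊥ ∧ ((I m).absNorm : ℝ) ≤ V := by
    intro m hm
    obtain ⟨hne, c1, c2, _⟩ := hMm m hm
    obtain ⟨i1, i2, _⟩ := hI m
    by_cases e : m.1 = 0
    · have e2 : m.2.1 ≠ 0 := fun h => hne ⟨e, h⟩
      refine ⟨fun h => e2 ?_, (absNorm_le_absNorm_of_mem i2 e2).trans (absNorm_span_singleton_le_pow c2)⟩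
      rwa [h] at i2
    · refine ⟨fun h => e ?_, (absNorm_le_absNorm_of_mem i1 e).trans (absNorm_span_singleton_le_pow c1)⟩
      rwa [h] at i1
  have b1 : (S₁.card : ℝ) ≤ ∑ m ∈ M, C₂ * V ^ 2 *
      ((I m).absNorm * (invSqrtNorm m.1 * invSqrtNorm m.2.1)) := by
    rw [Finset.card_eq_sum_card_fiberwise (f := Prod.fst) (t := M)
      (fun p hp => Finset.mem_image_of_mem _ hp)]
    push_cast
    refine Finset.sum_le_sum fun m hm => ?_
    obtain ⟨hne, c1, c2, _⟩ := hMm m hm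
    have hmem : ∀ κ ∈ (S₁.filter (fun p => p.1 = m)).image Prod.snd, (m, κ) ∈ S := by
      intro κ hκ
      obtain ⟨p, hp, rfl⟩ := Finset.mem_image.1 hκ
      rw [Finset.mem_filter] at hp
      rw [← hp.2]
      exact (Finset.mem_filter.1 hp.1).1
    have hbd : ∀ κ ∈ (S₁.filter (fun p => p.1 = m)).image Prod.snd,
        house (κ.1 : k) ≤ X ∧ house (κ.2.1 : k) ≤ X ∧ house (κ.2.2 : k) ≤ X :=
      fun κ hκ => (hS (m, κ) (hmem κ hκ)).2
    have hzero : ∀ κ ∈ (S₁.filter (fun p => p.1 = m)).image Prod.snd,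
        m.1 * κ.1 + m.2.1 * κ.2.1 + m.2.2 * κ.2.2 = 0 :=
      fun κ hκ => hker (m, κ) (hmem κ hκ)
    have := h₂ X hX m.1 m.2.1 m.2.2 hne c1 c2 _ hbd hzero
    rw [Finset.card_image_of_injOn] at this
    · exact this
    · intro p hp q hq hpq
      have hp2 := (Finset.mem_filter.1 hp).2
      have hq2 := (Finset.mem_filter.1 hq).2
      exact Prod.ext (hp2.trans hq2.symm) hpq
  rw [← Finset.mul_sum] at b1
  set G := M.image I with hG
  have hGm : ∀ g ∈ G, g ≠ ⊥ ∧ (g.absNorm : ℝ) ≤ V := by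
    intro g hg
    obtain ⟨m, hm, rfl⟩ := Finset.mem_image.1 hg
    exact hIM m hm
  have b2 : ∑ m ∈ M, ((I m).absNorm : ℝ) * (invSqrtNorm m.1 * invSqrtNorm m.2.1) ≤
      ∑ g ∈ G, C₃ * V * (1 + V * (1 / (g.absNorm : ℝ) ^ 2)) := by
    rw [← Finset.sum_fiberwise_of_maps_to (g := I) (t := G)
      (fun m hm => Finset.mem_image_of_mem I hm)]
    refine Finset.sum_le_sum fun g hg => ?_
    have := h₃ X hX g (hGm g hg).1 (hGm g hg).2 (M.filter (fun m => I m = g)) (by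
      intro m hm
      rw [Finset.mem_filter] at hm
      refine ⟨?_, (hMm m hm.1).2⟩
      rw [← hm.2]
      exact hI m)
    refine le_trans (le_of_eq (Finset.sum_congr rfl fun m hm => ?_)) this
    rw [(Finset.mem_filter.1 hm).2]
  have b3 : ∑ g ∈ G, C₃ * V * (1 + V * (1 / (g.absNorm : ℝ) ^ 2)) ≤ C₃ * V * (C₄ * V + V * C₅) := by
    rw [← Finset.mul_sum, Finset.sum_add_distrib, ← Finset.mul_sum]
    have e1 := h₄ V hV1 G (fun g hg => (hGm g hg).1) (fun g hg => (hGm g hg).2)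
    have e2 := h₅ G (fun g hg => (hGm g hg).1)
    simp only [Finset.sum_const, nsmul_eq_mul, mul_one]
    gcongr
  have b4 : (S₁.card : ℝ) ≤ C₂ * V ^ 2 * (C₃ * V * (C₄ * V + V * C₅)) :=
    b1.trans (mul_le_mul_of_nonneg_left (b2.trans b3) (by positivity))
  rw [hsplit]
  push_cast
  calc (S₀.card : ℝ) + S₁.card ≤ C₁ ^ 4 * V ^ 4 + C₂ * V ^ 2 * (C₃ * V * (C₄ * V + V * C₅)) :=
        add_le_add b0 b4
    _ = _ := by ring

theorem card_sq_le_card_image_mul {α β : Type*} [DecidableEq β] (U : Finset α) (F : α → β) :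
    (U.card : ℝ) ^ 2 ≤ (U.image F).card *
      (((U ×ˢ U).filter fun p => F p.1 = F p.2).card : ℝ) := by
  classical
  have h1 : (U.card : ℝ) = ∑ y ∈ U.image F, ((U.filter fun u => F u = y).card : ℝ) := by
    exact_mod_cast Finset.card_eq_sum_card_fiberwise (fun u hu => Finset.mem_image_of_mem F hu)
  have h2 : (((U ×ˢ U).filter fun p => F p.1 = F p.2).card : ℝ) =
      ∑ y ∈ U.image F, ((U.filter fun u => F u = y).card : ℝ) ^ 2 := by
    rw [Finset.card_eq_sum_card_fiberwise (f := fun p => F p.1) (t := U.image F)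
      (fun p hp => Finset.mem_image_of_mem F (Finset.mem_product.1 (Finset.mem_filter.1 hp).1).1)]
    push_cast
    refine Finset.sum_congr rfl fun y _ => ?_
    rw [sq, ← Nat.cast_mul, ← Finset.card_product]
    congr 2
    ext p
    simp only [Finset.mem_filter, Finset.mem_product]
    constructor
    · rintro ⟨⟨⟨a, b⟩, c⟩, d⟩
      exact ⟨⟨a, d⟩, b, by rw [← c, d]⟩
    · rintro ⟨⟨a, d⟩, b, c⟩
      exact ⟨⟨⟨a, b⟩, by rw [d, c]⟩, d⟩
  rw [h1, h2]
  exact sq_sum_le_card_mul_sum_sq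

/-- The ternary diagonal form with coefficients `c₁, c₂, c₃`. -/
def ternaryForm (c₁ c₂ c₃ : 𝓞 k) (u : 𝓞 k × 𝓞 k × 𝓞 k) : 𝓞 k :=
  c₁ * u.1 ^ 2 + c₂ * u.2.1 ^ 2 + c₃ * u.2.2 ^ 2

theorem house_mul_le' (x y : 𝓞 k) : house ((x * y : 𝓞 k) : k) ≤ house (x : k) * house (y : k) := by
  have : ((x * y : 𝓞 k) : k) = x * y := by simp
  rw [this]; exact house_mul_le _ _

theorem house_add_le' (x y : 𝓞 k) : house ((x + y : 𝓞 k) : k) ≤ house (x : k) + house (y : k) := by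
  have : ((x + y : 𝓞 k) : k) = x + y := by simp
  rw [this]; exact house_add_le _ _

theorem house_neg (x : k) : house (-x) = house x := by
  simp [house]

theorem house_sub_le' (x y : 𝓞 k) : house ((x - y : 𝓞 k) : k) ≤ house (x : k) + house (y : k) := by
  have := house_add_le' x (-y)
  rw [← sub_eq_add_neg] at this
  have h : ((-y : 𝓞 k) : k) = -(y : k) := by simp
  rwa [h, house_neg] at this

/-- Ternary diagonal forms take many values. -/
theorem exists_le_card_image_ternaryForm (c₁ c₂ c₃ : 𝓞 k) (h1 : c₁ ≠ 0) (h2 : c₂ ≠ 0) (h3 : c₃ ≠ 0) :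
    ∃ δ : ℝ, 0 < δ ∧ ∀ (X : ℝ) (_ : 1 ≤ X), ∃ V : Finset (𝓞 k),
      (∀ s ∈ V, ∃ u, s = ternaryForm c₁ c₂ c₃ u ∧
        house (u.1 : k) ≤ X ∧ house (u.2.1 : k) ≤ X ∧ house (u.2.2 : k) ≤ X) ∧
      δ * (X ^ Module.finrank ℚ k) ^ 2 ≤ V.card := by
  classical
  obtain ⟨c, hc, hlow⟩ := exists_le_card_houseBall k
  obtain ⟨C, hC, hT⟩ := exists_card_bilinear_le k
  set N := Module.finrank ℚ k with hN
  set W : ℝ := 2 * (1 + house (c₁ : k) + house (c₂ : k) + house (c₃ : k)) with hW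
  have g1 := house_nonneg (c₁ : k)
  have g2 := house_nonneg (c₂ : k)
  have g3 := house_nonneg (c₃ : k)
  have hW1 : 1 ≤ W := by rw [hW]; linarith
  refine ⟨c ^ 6 / (C * W ^ (4 * N)), by positivity, ?_⟩
  intro X hX
  set V := X ^ N with hV
  have hV0 : 0 < V := by positivity
  set B := houseBall k X with hB
  set U := B ×ˢ B ×ˢ B with hU
  have hUm : ∀ u ∈ U, house (u.1 : k) ≤ X ∧ house (u.2.1 : k) ≤ X ∧ house (u.2.2 : k) ≤ X := by
    intro u hu
    simpa [hU, hB] using hu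
  refine ⟨U.image (ternaryForm c₁ c₂ c₃), ?_, ?_⟩
  · intro s hs
    obtain ⟨u, hu, rfl⟩ := Finset.mem_image.1 hs
    exact ⟨u, rfl, hUm u hu⟩
  have hCS := card_sq_le_card_image_mul U (ternaryForm c₁ c₂ c₃)
  set E := (U ×ˢ U).filter fun p => ternaryForm c₁ c₂ c₃ p.1 = ternaryForm c₁ c₂ c₃ p.2 with hE
  let f : (𝓞 k × 𝓞 k × 𝓞 k) × (𝓞 k × 𝓞 k × 𝓞 k) → (𝓞 k × 𝓞 k × 𝓞 k) × (𝓞 k × 𝓞 k × 𝓞 k) :=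
    fun p => ((c₁ * (p.1.1 - p.2.1), c₂ * (p.1.2.1 - p.2.2.1), c₃ * (p.1.2.2 - p.2.2.2)),
      (p.1.1 + p.2.1, p.1.2.1 + p.2.2.1, p.1.2.2 + p.2.2.2))
  have two0 : (2 : 𝓞 k) ≠ 0 := two_ne_zero
  have haux : ∀ d x y x' y' : 𝓞 k, d ≠ 0 → d * (x - y) = d * (x' - y') → x + y = x' + y' →
      x = x' ∧ y = y' := by
    intro d x y x' y' hd e1 e2
    have e3 := mul_left_cancel₀ hd e1
    constructor
    · apply mul_left_cancel₀ two0; linear_combination e3 + e2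
    · apply mul_left_cancel₀ two0; linear_combination e2 - e3
  have hinj : Function.Injective f := by
    rintro ⟨⟨a, b, d⟩, a', b', d'⟩ ⟨⟨x, y, z⟩, x', y', z'⟩ h
    simp only [f, Prod.mk.injEq] at h
    obtain ⟨⟨r1, r2, r3⟩, s1, s2, s3⟩ := h
    obtain ⟨rfl, rfl⟩ := haux _ _ _ _ _ h1 r1 s1
    obtain ⟨rfl, rfl⟩ := haux _ _ _ _ _ h2 r2 s2
    obtain ⟨rfl, rfl⟩ := haux _ _ _ _ _ h3 r3 s3
    rfl
  have hmul : ∀ d x y : 𝓞 k, 2 * house (d : k) ≤ W → house (x : k) ≤ X → house (y : k) ≤ X →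
      house ((d * (x - y) : 𝓞 k) : k) ≤ W * X := by
    intro d x y hd hx hy
    have e1 := house_mul_le' d (x - y)
    have e2 := house_sub_le' x y
    have e3 := house_nonneg (d : k)
    nlinarith
  have hadd : ∀ x y : 𝓞 k, house (x : k) ≤ X → house (y : k) ≤ X →
      house ((x + y : 𝓞 k) : k) ≤ W * X := by
    intro x y hx hy
    have e2 := house_add_le' x y
    have : 2 ≤ W := by rw [hW]; linarith
    nlinarith
  have hEc := hT (W * X) (by nlinarith) (E.image f) (by
    intro p hp
    obtain ⟨q, hq, rfl⟩ := Finset.mem_image.1 hp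
    rw [hE, Finset.mem_filter, Finset.mem_product] at hq
    obtain ⟨x1, x2, x3⟩ := hUm _ hq.1.1
    obtain ⟨y1, y2, y3⟩ := hUm _ hq.1.2
    refine ⟨⟨hmul _ _ _ ?_ x1 y1, hmul _ _ _ ?_ x2 y2, hmul _ _ _ ?_ x3 y3⟩,
      hadd _ _ x1 y1, hadd _ _ x2 y2, hadd _ _ x3 y3⟩ <;> (rw [hW]; linarith)) (by
    intro p hp
    obtain ⟨q, hq, rfl⟩ := Finset.mem_image.1 hp
    rw [hE, Finset.mem_filter] at hq
    have := hq.2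
    simp only [ternaryForm] at this
    simp only [f]
    linear_combination this)
  rw [Finset.card_image_of_injective _ hinj, mul_pow] at hEc
  have hUc : (c * V) ^ 3 ≤ (U.card : ℝ) := by
    have e1 := hlow X (by linarith)
    have e2 : (U.card : ℝ) = (B.card : ℝ) ^ 3 := by
      rw [hU, Finset.card_product, Finset.card_product]; push_cast; ring
    rw [e2]
    gcongr
  have key : ((c * V) ^ 3) ^ 2 ≤ ((U.image (ternaryForm c₁ c₂ c₃)).card : ℝ) * (C * (W ^ N * V) ^ 4) := by
    refine le_trans ?_ (hCS.trans (mul_le_mul_of_nonneg_left hEc (by positivity)))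
    gcongr
  rw [← div_le_iff₀ (by positivity)] at key
  refine le_trans (le_of_eq ?_) key
  rw [pow_mul' W 4 N]
  field_simp

/-- For every large `X` some `n ∉ p` is represented by `a² + c₁u₁² + c₂u₂² + c₃u₃²` with a positive
proportion of all `a` of size at most `X`. -/
theorem exists_popular (p : Ideal (𝓞 k)) (hp : p.IsPrime) (c₁ c₂ c₃ : 𝓞 k) (h1 : c₁ ≠ 0) (h2 : c₂ ≠ 0)
    (h3 : c₃ ≠ 0) (h1p : c₁ ∈ p) (h2p : c₂ ∈ p) (h3p : c₃ ∈ p) :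
    ∃ δ C : ℝ, 0 < δ ∧ 0 < C ∧ ∀ (X : ℝ) (_ : 2 ≤ X), ∃ (n : 𝓞 k) (A : Finset (𝓞 k)),
      n ∉ p ∧ house (n : k) ≤ C * X ^ 2 ∧ δ * X ^ Module.finrank ℚ k ≤ A.card ∧
      ∀ a ∈ A, house (a : k) ≤ X ∧ ∃ u, n = a ^ 2 + ternaryForm c₁ c₂ c₃ u := by
  classical
  obtain ⟨c, hc, hlow⟩ := exists_le_card_houseBall k
  obtain ⟨D, hD, hup⟩ := exists_card_houseBall_le k
  obtain ⟨δ, hδ, hF⟩ := exists_le_card_image_ternaryForm c₁ c₂ c₃ h1 h2 h3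
  set N := Module.finrank ℚ k with hN
  set W : ℝ := 1 + house (c₁ : k) + house (c₂ : k) + house (c₃ : k) with hW
  have g1 := house_nonneg (c₁ : k)
  have g2 := house_nonneg (c₂ : k)
  have g3 := house_nonneg (c₃ : k)
  have hW1 : 1 ≤ W := by rw [hW]; linarith
  refine ⟨c * (1 / 2) ^ N / 2 * δ / (D * W ^ N), W, by positivity, by positivity, ?_⟩
  intro X hX
  obtain ⟨S, hS, hSc⟩ := hF X (by linarith)
  set V := X ^ N with hV
  have hV0 : 0 < V := by positivity
  set A₀ := (houseBall k X).filter (fun a => a ∉ p) with hA₀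
  have hA₀c : c * (1 / 2) ^ N / 2 * V ≤ A₀.card := by
    have e1 := hlow (X / 2) (by linarith)
    have e2 := Finset.card_filter_add_card_filter_not (s := houseBall k (X / 2)) (fun a => a ∈ p)
    have e3 : ((houseBall k (X / 2)).filter (fun a => a ∈ p)).card ≤ A₀.card := by
      refine Finset.card_le_card_of_injOn (fun a => a + 1) ?_ ?_
      · intro a ha
        rw [Finset.mem_coe, Finset.mem_filter, mem_houseBall] at ha
        simp only [hA₀, Finset.coe_filter, Set.mem_ofPred_eq, mem_houseBall]
        constructor
        · have := house_add_le' a 1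
          have h1 : house ((1 : 𝓞 k) : k) = 1 := by
            have := house_intCast (K := k) 1
            simpa using this
          linarith [ha.1]
        · intro h
          apply hp.ne_top
          rw [Ideal.eq_top_iff_one]
          have := p.sub_mem h ha.2
          simpa using this
      · intro a _ b _ h
        exact add_right_cancel h
    have e4 : ((houseBall k (X / 2)).filter (fun a => ¬ a ∈ p)).card ≤ A₀.card := by
      refine Finset.card_le_card fun a ha => ?_
      rw [Finset.mem_filter, mem_houseBall] at ha
      rw [hA₀, Finset.mem_filter, mem_houseBall]
      exact ⟨by linarith [ha.1], ha.2⟩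
    have e5 : ((houseBall k (X / 2)).card : ℝ) ≤ 2 * A₀.card := by
      have : (houseBall k (X / 2)).card ≤ 2 * A₀.card := by omega
      exact_mod_cast this
    have e6 : (X / 2) ^ N = (1 / 2) ^ N * V := by rw [hV, ← mul_pow]; congr 1; ring
    rw [e6] at e1
    linarith
  have hpair : ∀ q ∈ A₀ ×ˢ S, q.1 ^ 2 + q.2 ∈ houseBall k (W * X ^ 2) := by
    rintro ⟨a, s⟩ hq
    rw [Finset.mem_product, hA₀, Finset.mem_filter, mem_houseBall] at hq
    obtain ⟨⟨ha, _⟩, hs⟩ := hq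
    obtain ⟨u, rfl, x1, x2, x3⟩ := hS s hs
    rw [mem_houseBall]
    simp only at ha ⊢
    have sqb : ∀ x : 𝓞 k, house (x : k) ≤ X → house ((x ^ 2 : 𝓞 k) : k) ≤ X ^ 2 := by
      intro x hx
      rw [sq, sq]
      exact (house_mul_le' x x).trans (mul_le_mul hx hx (house_nonneg _) (by linarith))
    have csq : ∀ d x : 𝓞 k, house (x : k) ≤ X → house ((d * x ^ 2 : 𝓞 k) : k) ≤ house (d : k) * X ^ 2 :=
      fun d x hx => (house_mul_le' _ _).trans (mul_le_mul_of_nonneg_left (sqb x hx) (house_nonneg _))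
    have t1 := csq c₁ _ x1
    have t2 := csq c₂ _ x2
    have t3 := csq c₃ _ x3
    have t0 := sqb a ha
    have s1 := house_add_le' (a ^ 2) (ternaryForm c₁ c₂ c₃ u)
    have s2 := house_add_le' (c₁ * u.1 ^ 2 + c₂ * u.2.1 ^ 2) (c₃ * u.2.2 ^ 2)
    have s3 := house_add_le' (c₁ * u.1 ^ 2) (c₂ * u.2.1 ^ 2)
    have s4 : house ((ternaryForm c₁ c₂ c₃ u : 𝓞 k) : k) =
      house ((c₁ * u.1 ^ 2 + c₂ * u.2.1 ^ 2 + c₃ * u.2.2 ^ 2 : 𝓞 k) : k) := rfl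
    rw [hW]
    linarith
  have hBne : (houseBall k (W * X ^ 2)).Nonempty := ⟨0, by
    rw [mem_houseBall]
    have := house_intCast (K := k) 0
    simp only [Int.cast_zero, abs_zero] at this
    simp only [map_zero, this]
    positivity⟩
  have hBc := hup (W * X ^ 2) (by nlinarith)
  have hb : (houseBall k (W * X ^ 2)).card • (c * (1 / 2) ^ N / 2 * δ / (D * W ^ N) * V) ≤
      ((A₀ ×ˢ S).card : ℝ) := by
    rw [nsmul_eq_mul, Finset.card_product]
    push_cast
    have e0 : (W * X ^ 2) ^ N = W ^ N * V ^ 2 := by rw [mul_pow, hV, ← pow_mul, ← pow_mul, mul_comm 2 N]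
    rw [e0] at hBc
    calc _ ≤ D * (W ^ N * V ^ 2) * (c * (1 / 2) ^ N / 2 * δ / (D * W ^ N) * V) := by gcongr
      _ = (c * (1 / 2) ^ N / 2 * V) * (δ * V ^ 2) := by field_simp
      _ ≤ _ := by gcongr
  obtain ⟨n, hn, hfib⟩ := Finset.exists_le_card_fiber_of_nsmul_le_card_of_maps_to hpair hBne hb
  set Φ := (A₀ ×ˢ S).filter (fun q => q.1 ^ 2 + q.2 = n) with hΦ
  have hΦm : ∀ q ∈ Φ, q.1 ∈ A₀ ∧ q.2 ∈ S ∧ q.1 ^ 2 + q.2 = n := by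
    intro q hq
    rw [hΦ, Finset.mem_filter, Finset.mem_product] at hq
    exact ⟨hq.1.1, hq.1.2, hq.2⟩
  have hAc : (Φ.image Prod.fst).card = Φ.card := by
    refine Finset.card_image_of_injOn ?_
    intro q hq q' hq' h
    have e := (hΦm q hq).2.2
    have e' := (hΦm q' hq').2.2
    refine Prod.ext h ?_
    have h' : q.1 = q'.1 := h
    rw [h'] at e
    exact add_left_cancel (e.trans e'.symm)
  have hΦne : Φ.Nonempty := by
    rw [← Finset.card_pos]
    have : (0 : ℝ) < Φ.card := lt_of_lt_of_le (by positivity) hfib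
    exact_mod_cast this
  refine ⟨n, Φ.image Prod.fst, ?_, mem_houseBall.1 hn, ?_, ?_⟩
  · obtain ⟨q, hq⟩ := hΦne
    obtain ⟨q1, q2, q3⟩ := hΦm q hq
    obtain ⟨u, hu, _⟩ := hS _ q2
    intro hnp
    have hs : q.2 ∈ p := by
      rw [hu, ternaryForm]
      exact p.add_mem (p.add_mem (p.mul_mem_right _ h1p) (p.mul_mem_right _ h2p))
        (p.mul_mem_right _ h3p)
    have ha : q.1 ^ 2 ∈ p := by
      have := p.sub_mem hnp hs
      rwa [← q3, add_sub_cancel_right] at this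
    rw [hA₀, Finset.mem_filter] at q1
    exact q1.2 (hp.mem_of_pow_mem 2 ha)
  · rw [hAc]; exact hfib
  · intro a ha
    obtain ⟨q, hq, rfl⟩ := Finset.mem_image.1 ha
    obtain ⟨q1, q2, q3⟩ := hΦm q hq
    obtain ⟨u, hu, _⟩ := hS _ q2
    rw [hA₀, Finset.mem_filter, mem_houseBall] at q1
    exact ⟨q1.1, u, by rw [← q3, hu]⟩

/-- `n` is represented by `a² + c₁u₁² + c₂u₂² + c₃u₃²` with integral `u`. -/
def IntRep (c₁ c₂ c₃ a n : 𝓞 k) : Prop := ∃ u, n = a ^ 2 + ternaryForm c₁ c₂ c₃ u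

/-- A small multiple of `t` is a difference of two elements represented together with `n`. -/
def IntDiff (c₁ c₂ c₃ : 𝓞 k) (M : ℕ) (t n : 𝓞 k) : Prop :=
  ∃ a a' : 𝓞 k, IntRep c₁ c₂ c₃ a n ∧ IntRep c₁ c₂ c₃ a' n ∧
    ∃ e : ℕ, 1 ≤ e ∧ e ≤ M ∧ (e : 𝓞 k) * t = a - a'

/-- `t = K t₀ + t₁` with both digits satisfying `IntDiff`. -/
def IntDigits (c₁ c₂ c₃ : 𝓞 k) (M K : ℕ) (t n : 𝓞 k) : Prop :=
  ∃ t₀ t₁ : 𝓞 k, IntDiff c₁ c₂ c₃ M t₀ n ∧ IntDiff c₁ c₂ c₃ M t₁ n ∧ t = K * t₀ + t₁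

variable (k) in
theorem exists_abs_repr_le : ∃ C : ℝ, 0 < C ∧ ∀ (x : 𝓞 k) i,
    |((RingOfIntegers.basis k).repr x i : ℝ)| ≤ C * house (x : k) := by
  classical
  have h : ∃ C : ℝ, ∀ (α : 𝓞 k) (i : k →+* ℂ),
      ‖(((integralBasis k).reindex (equivReindex k).symm).repr α i : ℂ)‖ ≤
      C * house (algebraMap (𝓞 k) k α) := ⟨_, house.basis_repr_norm_le_const_mul_house k⟩
  obtain ⟨C, hC⟩ := h
  refine ⟨max C 1, by positivity, fun x i => ?_⟩
  have h1 := hC x ((equivReindex k).symm i)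
  have h2 : house (x : k) * C ≤ house (x : k) * max C 1 := by
    gcongr
    · exact house_nonneg _
    · exact le_max_left _ _
  rw [Module.Basis.repr_reindex_apply, NumberField.integralBasis_repr_apply] at h1
  simp only [Equiv.symm_symm, Equiv.apply_symm_apply, eq_intCast, Rat.cast_intCast, Complex.norm_intCast] at h1
  linarith

theorem exists_multiple_eq_sub {A : Finset (𝓞 k)} {X : ℝ} {M : ℕ} {t : 𝓞 k}
    (hA : ∀ a ∈ A, house (a : k) ≤ X) (ht : M * house (t : k) ≤ X)
    (hcard : ((houseBall k (2 * X)).card : ℝ) < (M + 1) * A.card) :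
    ∃ a ∈ A, ∃ a' ∈ A, ∃ e : ℕ, 1 ≤ e ∧ e ≤ M ∧ (e : 𝓞 k) * t = a - a' := by
  classical
  have hmaps : ∀ q ∈ Finset.range (M + 1) ×ˢ A, q.2 + q.1 * t ∈ houseBall k (2 * X) := by
    rintro ⟨i, a⟩ hq
    rw [Finset.mem_product, Finset.mem_range] at hq
    rw [mem_houseBall]
    have h1 := house_add_le' a (i * t)
    have h2 := house_mul_le' (i : 𝓞 k) t
    have h3 : house (((i : 𝓞 k)) : k) = i := by
      have := house_intCast (K := k) i
      simpa using this
    rw [h3] at h2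
    have h4 : (i : ℝ) ≤ M := by exact_mod_cast Nat.lt_succ_iff.1 hq.1
    have h5 := hA a hq.2
    have h6 := house_nonneg (t : k)
    have h7 : (i : ℝ) * house (t : k) ≤ M * house (t : k) := by gcongr
    simp only at h1 ⊢
    linarith
  have hlt : (houseBall k (2 * X)).card < (Finset.range (M + 1) ×ˢ A).card := by
    rw [Finset.card_product, Finset.card_range]
    exact_mod_cast hcard
  obtain ⟨⟨i, a⟩, hq, ⟨i', a'⟩, hq', hne, heq⟩ := Finset.exists_ne_map_eq_of_card_lt_of_maps_to hlt hmaps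
  rw [Finset.mem_product, Finset.mem_range] at hq hq'
  simp only at hq hq' heq
  have hii : i ≠ i' := by
    rintro rfl
    exact hne (by rw [add_right_cancel heq])
  rcases lt_or_gt_of_ne hii with h | h
  · refine ⟨a, hq.2, a', hq'.2, i' - i, by omega, by omega, ?_⟩
    rw [Nat.cast_sub h.le]
    linear_combination -heq
  · refine ⟨a', hq'.2, a, hq.2, i - i', by omega, by omega, ?_⟩
    rw [Nat.cast_sub h.le]
    linear_combination heq

theorem IntDigits.of_forall_intDiff {c₁ c₂ c₃ n : 𝓞 k} {M K : ℕ} (hK : 0 < K) {X B : ℝ}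
    (h : ∀ t : 𝓞 k, M * house (t : k) ≤ X → IntDiff c₁ c₂ c₃ M t n)
    (h1 : M * (B / K + 1) ≤ X) (h2 : M * (K : ℝ) ≤ X) {z : ℤ} (hz : |(z : ℝ)| ≤ B) :
    IntDigits c₁ c₂ c₃ M K (z : 𝓞 k) n := by
  have hK' : (0 : ℝ) < K := by exact_mod_cast hK
  have hKz : (0 : ℤ) < K := by exact_mod_cast hK
  have hcast : ∀ w : ℤ, house (((w : 𝓞 k)) : k) = |(w : ℝ)| := by
    intro w
    simp
  have hmod0 := Int.emod_nonneg z hKz.ne'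
  have hmod1 := Int.emod_lt_of_pos z hKz
  have hdm : (z : ℝ) = K * (z / K : ℤ) + (z % K : ℤ) := by
    exact_mod_cast (Int.mul_ediv_add_emod z K).symm
  have hm0 : (0 : ℝ) ≤ ((z % K : ℤ) : ℝ) := by exact_mod_cast hmod0
  have hm1 : ((z % K : ℤ) : ℝ) < K := by exact_mod_cast hmod1
  refine ⟨((z / K : ℤ) : 𝓞 k), ((z % K : ℤ) : 𝓞 k), h _ ?_, h _ ?_, ?_⟩
  · rw [hcast]
    refine le_trans ?_ h1
    gcongr
    obtain ⟨hz1, hz2⟩ := abs_le.1 hz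
    have e1 : (B / K + 1) * K = B + K := by field_simp
    rw [abs_le]
    constructor
    · by_contra hc
      push Not at hc
      have := mul_lt_mul_of_pos_right hc hK'
      linarith
    · by_contra hc
      push Not at hc
      have := mul_lt_mul_of_pos_right hc hK'
      linarith
  · rw [hcast, abs_of_nonneg hm0]
    refine le_trans ?_ h2
    gcongr
  · have := (Int.mul_ediv_add_emod z K).symm
    exact_mod_cast congrArg (Int.cast : ℤ → 𝓞 k) this

theorem exists_sq_decomposition (q : ℤ) {B : ℝ} (hB : 0 ≤ B) (hq : |(q : ℝ)| ≤ B ^ 2) :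
    ∃ r r' r'' : ℤ, |(r : ℝ)| ≤ 2 * B ∧ |(r' : ℝ)| ≤ 2 * B ∧ |(r'' : ℝ)| ≤ 2 * B ∧
      q = r * r'' + r' := by
  set a := q.natAbs with ha
  set r := Nat.sqrt a
  have h1 : r * r ≤ a := Nat.sqrt_le a
  have h2 : a ≤ r * r + r + r := Nat.sqrt_le_add a
  have ha' : (a : ℝ) ≤ B ^ 2 := by
    have : (a : ℝ) = |(q : ℝ)| := by rw [ha, Nat.cast_natAbs]; push_cast; rfl
    rwa [this]
  have hr : (r : ℝ) ≤ B := by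
    refine abs_le_of_sq_le_sq' ?_ hB |>.2
    have : ((r * r : ℕ) : ℝ) ≤ a := by exact_mod_cast h1
    push_cast at this
    nlinarith
  have hr0 : (0 : ℝ) ≤ r := by positivity
  have hs : ∀ s : ℤ, |(s : ℝ)| = 1 → q = s * a → ∃ r r' r'' : ℤ, |(r : ℝ)| ≤ 2 * B ∧
      |(r' : ℝ)| ≤ 2 * B ∧ |(r'' : ℝ)| ≤ 2 * B ∧ q = r * r'' + r' := by
    intro s hs hq
    refine ⟨s * r, s * ((a : ℤ) - r * r), r, ?_, ?_, ?_, ?_⟩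
    · push_cast
      rw [abs_mul, hs, abs_of_nonneg hr0]
      linarith
    · have g1 : ((r * r : ℕ) : ℝ) ≤ a := by exact_mod_cast h1
      have g2 : (a : ℝ) ≤ ((r * r + r + r : ℕ) : ℝ) := by exact_mod_cast h2
      push_cast at g1 g2 ⊢
      rw [abs_mul, hs, abs_of_nonneg (by linarith)]
      linarith
    · push_cast
      rw [abs_of_nonneg hr0]
      linarith
    · rw [hq]; ring
  rcases le_total 0 q with h | h
  · exact hs 1 (by simp) (by omega)
  · exact hs (-1) (by simp) (by omega)

theorem exists_certificate (p : Ideal (𝓞 k)) (hp : p.IsPrime) (c₁ c₂ c₃ : 𝓞 k) (h1 : c₁ ≠ 0)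
    (h2 : c₂ ≠ 0) (h3 : c₃ ≠ 0) (h1p : c₁ ∈ p) (h2p : c₂ ∈ p) (h3p : c₃ ∈ p) :
    ∃ M : ℕ, 0 < M ∧ ∀ ϱ : 𝓞 k, ϱ ≠ 0 → ∀ S : Finset (𝓞 k), ∃ K : ℕ, ∀ z : 𝓞 k, ∃ n ∉ p,
      IntDiff c₁ c₂ c₃ M z n ∧ IntDigits c₁ c₂ c₃ M K 1 n ∧
      ∀ c ∈ S, ∀ q, n = c + ϱ * q →
        ∃ r r' r'' : Module.Free.ChooseBasisIndex ℤ (𝓞 k) → ℤ,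
          (∀ i, IntDigits c₁ c₂ c₃ M K (r i : 𝓞 k) n ∧ IntDigits c₁ c₂ c₃ M K (r' i : 𝓞 k) n ∧
            IntDigits c₁ c₂ c₃ M K (r'' i : 𝓞 k) n) ∧
          q = ∑ i, ((r i : 𝓞 k) * r'' i + r' i) * RingOfIntegers.basis k i := by
  obtain ⟨δ, C, hδ, hC, hpop⟩ := exists_popular p hp c₁ c₂ c₃ h1 h2 h3 h1p h2p h3p
  obtain ⟨D, hD, hup⟩ := exists_card_houseBall_le k
  obtain ⟨E, hE, hrepr⟩ := exists_abs_repr_le k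
  set N := Module.finrank ℚ k with hN
  obtain ⟨M, hM⟩ := exists_nat_gt (D * 2 ^ N / δ)
  have hM0 : 0 < M := by
    have : (0 : ℝ) < M := lt_of_le_of_lt (by positivity) hM
    exact_mod_cast this
  refine ⟨M, hM0, fun ϱ hϱ S => ?_⟩
  set H : ℝ := ∑ c ∈ S, house (c : k)
  have hH0 : 0 ≤ H := Finset.sum_nonneg fun c _ => house_nonneg _
  obtain ⟨γ, hγ⟩ : ∃ γ : ℝ, γ = E * (house ((ϱ : k)⁻¹) * (C + H)) := ⟨_, rfl⟩
  have hγ0 : 0 ≤ γ := by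
    rw [hγ]
    exact mul_nonneg hE.le (mul_nonneg (house_nonneg _) (add_nonneg hC.le hH0))
  obtain ⟨β, hβd⟩ : ∃ β : ℝ, β = 2 * (1 + γ) := ⟨_, rfl⟩
  have hβ0 : 0 ≤ β := by linarith
  obtain ⟨K, hK⟩ := exists_nat_gt (2 * β * M)
  have hK' : (0 : ℝ) < K := lt_of_le_of_lt (by positivity) hK
  have hK0 : 0 < K := by exact_mod_cast hK'
  refine ⟨K, fun z => ?_⟩
  have hz0 := house_nonneg (z : k)
  obtain ⟨X, hX⟩ : ∃ X : ℝ, X = 2 + 2 * M + M * K + M * house (z : k) := ⟨_, rfl⟩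
  have hX2 : 2 ≤ X := by
    have : 0 ≤ 2 * (M : ℝ) + M * K + M * house (z : k) :=
      add_nonneg (by positivity) (mul_nonneg (by positivity) hz0)
    linarith
  have hX2M : 2 * (M : ℝ) ≤ X := by
    have : 0 ≤ 2 + (M : ℝ) * K + M * house (z : k) :=
      add_nonneg (by positivity) (mul_nonneg (by positivity) hz0)
    linarith
  have hXK : M * (K : ℝ) ≤ X := by
    have : 0 ≤ 2 + 2 * (M : ℝ) + M * house (z : k) :=
      add_nonneg (by positivity) (mul_nonneg (by positivity) hz0)
    linarith
  have hXz : M * house (z : k) ≤ X := by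
    have : 0 ≤ 2 + 2 * (M : ℝ) + M * K := by positivity
    linarith
  obtain ⟨n, A, hnp, hn, hA, hrep⟩ := hpop X hX2
  have hdiff : ∀ t : 𝓞 k, M * house (t : k) ≤ X → IntDiff c₁ c₂ c₃ M t n := by
    intro t ht
    obtain ⟨a, ha, a', ha', he⟩ := exists_multiple_eq_sub (fun a ha => (hrep a ha).1) ht (by
      calc ((houseBall k (2 * X)).card : ℝ) ≤ D * (2 * X) ^ N := hup _ (by linarith)
        _ = D * 2 ^ N * X ^ N := by rw [mul_pow]; ring
        _ < (M + 1) * (δ * X ^ N) := by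
          rw [div_lt_iff₀ hδ] at hM
          have hXN : 0 < X ^ N := by positivity
          nlinarith [mul_pos hδ hXN]
        _ ≤ (M + 1) * A.card := by gcongr)
    exact ⟨a, a', (hrep a ha).2, (hrep a' ha').2, he⟩
  have hdig : ∀ w : ℤ, |(w : ℝ)| ≤ β * X → IntDigits c₁ c₂ c₃ M K (w : 𝓞 k) n := by
    intro w hw
    refine IntDigits.of_forall_intDiff hK0 hdiff ?_ hXK hw
    have : (M : ℝ) * (β * X / K) ≤ X / 2 := by
      rw [← mul_div_assoc, div_le_iff₀ hK']
      nlinarith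
    linarith
  refine ⟨n, hnp, hdiff z hXz, ?_, ?_⟩
  · have := hdig 1 (by
      rw [Int.cast_one, abs_one]
      have : 2 ≤ β := by linarith
      nlinarith)
    simpa using this
  · intro c hc q hq
    have hcH : house (c : k) ≤ H :=
      Finset.single_le_sum (f := fun c : 𝓞 k => house (c : k)) (fun c _ => house_nonneg _) hc
    have hϱk : (ϱ : k) ≠ 0 := by simpa using hϱ
    have hqh : house (q : k) ≤ house ((ϱ : k)⁻¹) * ((C + H) * X ^ 2) := by
      have e : (q : k) = (ϱ : k)⁻¹ * ((n - c : 𝓞 k) : k) := by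
        rw [hq]
        push_cast
        field_simp
        ring
      rw [e]
      refine (house_mul_le _ _).trans ?_
      have := house_nonneg ((ϱ : k)⁻¹)
      gcongr
      refine (house_sub_le' _ _).trans ?_
      have : H ≤ H * X ^ 2 := by nlinarith [mul_nonneg hH0 (by nlinarith : 0 ≤ X ^ 2 - 1)]
      linarith
    have hqi : ∀ i, |((RingOfIntegers.basis k).repr q i : ℝ)| ≤ ((1 + γ) * X) ^ 2 := by
      intro i
      calc _ ≤ E * house (q : k) := hrepr q i
        _ ≤ E * (house ((ϱ : k)⁻¹) * ((C + H) * X ^ 2)) := by gcongr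
        _ = γ * X ^ 2 := by rw [hγ]; ring
        _ ≤ (1 + γ) ^ 2 * X ^ 2 := by gcongr; nlinarith
        _ = _ := by ring
    choose r r' r'' g1 g2 g3 g4 using fun i =>
      exists_sq_decomposition ((RingOfIntegers.basis k).repr q i) (by positivity) (hqi i)
    have hβ : 2 * ((1 + γ) * X) = β * X := by
      rw [hβd]
      ring
    refine ⟨r, r', r'', fun i => ⟨hdig _ (hβ ▸ g1 i), hdig _ (hβ ▸ g2 i), hdig _ (hβ ▸ g3 i)⟩, ?_⟩
    conv_lhs => rw [← (RingOfIntegers.basis k).sum_repr q]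
    refine Finset.sum_congr rfl fun i _ => ?_
    rw [g4 i, zsmul_eq_mul]
    push_cast
    ring

end IntegralRelations

section Dio
variable {k : Type*} [Field k] {σ τ ι : Type*}

/-- `f` is a polynomial function. -/
def IsPolynomialFun (f : (σ → k) → k) : Prop := ∃ p : MvPolynomial σ k, ∀ x, f x = MvPolynomial.eval x p

namespace IsPolynomialFun

theorem const (c : k) : IsPolynomialFun (fun _ : σ → k => c) := ⟨MvPolynomial.C c, by simp⟩

theorem var (i : σ) : IsPolynomialFun (fun x : σ → k => x i) := ⟨MvPolynomial.X i, by simp⟩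

theorem add {f g : (σ → k) → k} (hf : IsPolynomialFun f) (hg : IsPolynomialFun g) : IsPolynomialFun (fun x => f x + g x) := by
  obtain ⟨p, hp⟩ := hf
  obtain ⟨q, hq⟩ := hg
  exact ⟨p + q, by simp [hp, hq]⟩

theorem sub {f g : (σ → k) → k} (hf : IsPolynomialFun f) (hg : IsPolynomialFun g) : IsPolynomialFun (fun x => f x - g x) := by
  obtain ⟨p, hp⟩ := hf
  obtain ⟨q, hq⟩ := hg
  exact ⟨p - q, by simp [hp, hq]⟩

theorem mul {f g : (σ → k) → k} (hf : IsPolynomialFun f) (hg : IsPolynomialFun g) : IsPolynomialFun (fun x => f x * g x) := by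
  obtain ⟨p, hp⟩ := hf
  obtain ⟨q, hq⟩ := hg
  exact ⟨p * q, by simp [hp, hq]⟩

theorem pow {f : (σ → k) → k} (hf : IsPolynomialFun f) (n : ℕ) : IsPolynomialFun (fun x => f x ^ n) := by
  obtain ⟨p, hp⟩ := hf
  exact ⟨p ^ n, by simp [hp]⟩

theorem sum {f : ι → (σ → k) → k} {s : Finset ι} (hf : ∀ i, IsPolynomialFun (f i)) :
    IsPolynomialFun (fun x => ∑ i ∈ s, f i x) := by
  choose p hp using hf
  exact ⟨∑ i ∈ s, p i, by simp [hp]⟩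

theorem prod {f : ι → (σ → k) → k} {s : Finset ι} (hf : ∀ i, IsPolynomialFun (f i)) :
    IsPolynomialFun (fun x => ∏ i ∈ s, f i x) := by
  choose p hp using hf
  exact ⟨∏ i ∈ s, p i, by simp [hp]⟩

theorem lift {f : (σ → k) → k} (hf : IsPolynomialFun f) :
    IsPolynomialFun (fun y : σ ⊕ τ → k => f (fun i => y (Sum.inl i))) := by
  obtain ⟨p, hp⟩ := hf
  exact ⟨MvPolynomial.rename Sum.inl p, fun y => by
    rw [MvPolynomial.eval_rename]; exact hp _⟩

end IsPolynomialFun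

/-- `P` is a diophantine predicate. -/
def IsDio (P : (σ → k) → Prop) : Prop :=
  ∃ (m r : ℕ) (f : Fin r → MvPolynomial (σ ⊕ Fin m) k),
    ∀ a, P a ↔ ∃ b : Fin m → k, ∀ i, MvPolynomial.eval (Sum.elim a b) (f i) = 0

namespace IsDio

theorem of_finite [Finite τ] [Finite ι] {P : (σ → k) → Prop} (f : ι → MvPolynomial (σ ⊕ τ) k)
    (h : ∀ a, P a ↔ ∃ b : τ → k, ∀ i, MvPolynomial.eval (Sum.elim a b) (f i) = 0) : IsDio P := by
  obtain ⟨m, ⟨e⟩⟩ := Finite.exists_equiv_fin τ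
  obtain ⟨r, ⟨e'⟩⟩ := Finite.exists_equiv_fin ι
  refine ⟨m, r, fun i => MvPolynomial.rename (Sum.map id e) (f (e'.symm i)), fun a => ?_⟩
  rw [h]
  constructor
  · rintro ⟨b, hb⟩
    refine ⟨b ∘ e.symm, fun i => ?_⟩
    rw [MvPolynomial.eval_rename, ← hb (e'.symm i)]
    congr 1
    congr 1
    ext (j | j) <;> simp
  · rintro ⟨b, hb⟩
    refine ⟨b ∘ e, fun i => ?_⟩
    have := hb (e' i)
    rw [MvPolynomial.eval_rename, Equiv.symm_apply_apply] at this
    rw [← this]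
    congr 1
    congr 1
    ext (j | j) <;> simp

theorem eq {f g : (σ → k) → k} (hf : IsPolynomialFun f) (hg : IsPolynomialFun g) : IsDio (fun x => f x = g x) := by
  obtain ⟨p, hp⟩ := hf.sub hg
  refine of_finite (τ := Empty) (ι := Unit) (fun _ => MvPolynomial.rename Sum.inl p) fun a => ?_
  have : ∀ b : Empty → k, MvPolynomial.eval (Sum.elim a b) (MvPolynomial.rename Sum.inl p) =
      f a - g a := by
    intro b
    rw [MvPolynomial.eval_rename]
    exact (hp _).symm
  simp [this, sub_eq_zero]

theorem all [Finite ι] {P : ι → (σ → k) → Prop} (h : ∀ i, IsDio (P i)) :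
    IsDio (fun x => ∀ i, P i x) := by
  choose m r f hf using h
  refine of_finite (τ := Σ i, Fin (m i)) (ι := Σ i, Fin (r i))
    (fun j => MvPolynomial.rename (Sum.map id (Sigma.mk j.1)) (f j.1 j.2)) fun a => ?_
  have key : ∀ (b : (Σ i, Fin (m i)) → k) (i : ι), Sum.elim a b ∘ Sum.map id (Sigma.mk i) =
      Sum.elim a (fun j => b ⟨i, j⟩) := by
    intro b i
    ext (j | j) <;> simp
  simp only [hf, MvPolynomial.eval_rename, key]
  constructor
  · intro h
    choose b hb using h
    exact ⟨fun j => b j.1 j.2, fun j => hb j.1 j.2⟩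
  · rintro ⟨b, hb⟩ i
    exact ⟨fun j => b ⟨i, j⟩, fun j => hb ⟨i, j⟩⟩

theorem and {P Q : (σ → k) → Prop} (hP : IsDio P) (hQ : IsDio Q) : IsDio (fun x => P x ∧ Q x) := by
  have := all (ι := Bool) (P := fun b => if b then P else Q) (by rintro (_ | _) <;> simpa)
  simpa [and_comm] using this

theorem ex [Finite τ] {P : (σ → k) → (τ → k) → Prop}
    (h : IsDio (fun y : σ ⊕ τ → k => P (fun i => y (Sum.inl i)) (fun j => y (Sum.inr j)))) :
    IsDio (fun x => ∃ b, P x b) := by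
  obtain ⟨m, r, f, hf⟩ := h
  refine of_finite (τ := τ ⊕ Fin m) (fun i => MvPolynomial.rename (Equiv.sumAssoc σ τ (Fin m)) (f i))
    fun a => ?_
  have key : ∀ (b : τ → k) (c : Fin m → k),
      Sum.elim a (Sum.elim b c) ∘ Equiv.sumAssoc σ τ (Fin m) = Sum.elim (Sum.elim a b) c := by
    intro b c
    ext ((j | j) | j) <;> simp
  constructor
  · rintro ⟨b, hb⟩
    obtain ⟨c, hc⟩ := (hf (Sum.elim a b)).1 hb
    refine ⟨Sum.elim b c, fun i => ?_⟩
    rw [MvPolynomial.eval_rename, key]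
    exact hc i
  · rintro ⟨b, hb⟩
    refine ⟨fun j => b (Sum.inl j), (hf (Sum.elim a fun j => b (Sum.inl j))).2
      ⟨fun j => b (Sum.inr j), fun i => ?_⟩⟩
    have := hb i
    rw [MvPolynomial.eval_rename] at this
    rw [← key]
    convert this using 4
    ext (j | j | j) <;> rfl

theorem ex₁ {P : (σ → k) → k → Prop}
    (h : IsDio (fun y : σ ⊕ Unit → k => P (fun i => y (Sum.inl i)) (y (Sum.inr ())))) :
    IsDio (fun x => ∃ b, P x b) := by
  have := ex (P := fun x (b : Unit → k) => P x (b ())) h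
  refine (congrArg IsDio (funext fun x => propext ?_)).mp this
  exact ⟨fun ⟨b, hb⟩ => ⟨_, hb⟩, fun ⟨b, hb⟩ => ⟨fun _ => b, hb⟩⟩

theorem isDiophantine {n : ℕ} {P : (Fin n → k) → Prop} (h : IsDio P) :
    IsDiophantine k {x | P x} := by
  obtain ⟨m, r, f, hf⟩ := h
  refine ⟨m, r, fun i => MvPolynomial.rename finSumFinEquiv (f i), ?_⟩
  ext a
  have key : ∀ b : Fin m → k, Fin.append a b ∘ finSumFinEquiv = Sum.elim a b := by
    intro b
    ext (j | j) <;> simp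
  simp only [Set.mem_ofPred_eq, hf, MvPolynomial.eval_rename, key]

end IsDio

end Dio

section FieldRelations
variable {F : Type*} [Field F] {σ ι J : Type*} [Fintype ι] [Fintype J]
variable (δ π ϱ : F) (M K m : ℕ) (ω : ι → F) (S : Finset F) (ρ : J → F)

/-- `n = a² - Δb² + π(c² - Δd²)` with `Δ = 1 + 4δ`. -/
def FieldRep (a n : F) : Prop :=
  ∃ b : Fin 3 → F, n = a ^ 2 - (1 + 4 * δ) * b 0 ^ 2 + π * (b 1 ^ 2 - (1 + 4 * δ) * b 2 ^ 2)

/-- One of `t, 2t, …, Mt` is a difference of two elements represented together with `n`. -/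
def FieldDiff (t n : F) : Prop :=
  ∃ a : Fin 2 → F, FieldRep δ π (a 0) n ∧ FieldRep δ π (a 1) n ∧
    ∏ e ∈ Finset.range M, ((e + 1 : F) * t - (a 0 - a 1)) = 0

/-- `t = K t₀ + t₁` with both digits satisfying `FieldDiff`. -/
def FieldDigits (t n : F) : Prop :=
  ∃ t' : Fin 2 → F, FieldDiff δ π M (t' 0) n ∧ FieldDiff δ π M (t' 1) n ∧ t = K * t' 0 + t' 1

/-- `y` is a combination of the `ω i` with coefficients `r r' + r''`, all satisfying
`FieldDigits`. -/
def FieldBounded (y n : F) : Prop :=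
  ∃ r : ι × Fin 3 → F, FieldDigits δ π M K 1 n ∧ (∀ j, FieldDigits δ π M K (r j) n) ∧
    y = ∑ i, (r (i, 0) * r (i, 1) + r (i, 2)) * ω i

/-- `n = c + ϱ q` with `c ∈ S` and `q` bounded in terms of `n`. -/
def FieldCert (n : F) : Prop :=
  ∃ c : Fin 2 → F, ∏ s ∈ S, (c 0 - s) = 0 ∧ FieldBounded δ π M K ω (c 1) n ∧ n = c 0 + ϱ * c 1

/-- A diophantine set of elements with bounded denominator at a place. -/
def FieldDom (z : F) : Prop := ∃ n, FieldCert δ π ϱ M K ω S n ∧ FieldDiff δ π M z n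

/-- Up to `m`-th powers, `t` is a quotient of elements close to `1`. -/
def FieldTarget (t : F) : Prop :=
  ∃ s : Fin 2 → F, ∃ c : J × Fin 2 → F, s 0 * s 1 = 1 ∧ (∀ j, FieldDom δ π ϱ M K ω S (c j)) ∧
    t * s 0 ^ m * (1 + ∑ j, ρ j * c (j, 1)) = 1 + ∑ j, ρ j * c (j, 0)

theorem FieldRep.isDio {a n : (σ → F) → F} (ha : IsPolynomialFun a) (hn : IsPolynomialFun n) :
    IsDio (fun x => FieldRep δ π (a x) (n x)) := by
  refine IsDio.ex (IsDio.eq hn.lift ?_)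
  exact ((ha.lift.pow 2).sub ((IsPolynomialFun.const _).mul ((IsPolynomialFun.var _).pow 2))).add
    ((IsPolynomialFun.const _).mul (((IsPolynomialFun.var _).pow 2).sub
      ((IsPolynomialFun.const _).mul ((IsPolynomialFun.var _).pow 2))))

theorem FieldDiff.isDio {t n : (σ → F) → F} (ht : IsPolynomialFun t) (hn : IsPolynomialFun n) :
    IsDio (fun x => FieldDiff δ π M (t x) (n x)) := by
  refine IsDio.ex ((FieldRep.isDio δ π (IsPolynomialFun.var _) hn.lift).and
    ((FieldRep.isDio δ π (IsPolynomialFun.var _) hn.lift).and (IsDio.eq ?_ (.const 0))))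
  exact .prod fun e => ((IsPolynomialFun.const _).mul ht.lift).sub
    ((IsPolynomialFun.var _).sub (.var _))

theorem FieldDigits.isDio {t n : (σ → F) → F} (ht : IsPolynomialFun t) (hn : IsPolynomialFun n) :
    IsDio (fun x => FieldDigits δ π M K (t x) (n x)) :=
  IsDio.ex ((FieldDiff.isDio δ π M (.var _) hn.lift).and
    ((FieldDiff.isDio δ π M (.var _) hn.lift).and
      (IsDio.eq ht.lift (((IsPolynomialFun.const _).mul (.var _)).add (.var _)))))

theorem FieldBounded.isDio {y n : (σ → F) → F} (hy : IsPolynomialFun y) (hn : IsPolynomialFun n) :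
    IsDio (fun x => FieldBounded δ π M K ω (y x) (n x)) :=
  IsDio.ex ((FieldDigits.isDio δ π M K (.const 1) hn.lift).and
    ((IsDio.all fun _ => FieldDigits.isDio δ π M K (.var _) hn.lift).and
      (IsDio.eq hy.lift (.sum fun _ => (((IsPolynomialFun.var _).mul (.var _)).add (.var _)).mul
        (.const _)))))

theorem FieldCert.isDio {n : (σ → F) → F} (hn : IsPolynomialFun n) :
    IsDio (fun x => FieldCert δ π ϱ M K ω S (n x)) :=
  IsDio.ex ((IsDio.eq (.prod fun _ => (IsPolynomialFun.var _).sub (.const _)) (.const 0)).and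
    ((FieldBounded.isDio δ π M K ω (.var _) hn.lift).and
      (IsDio.eq hn.lift ((IsPolynomialFun.var _).add ((IsPolynomialFun.const _).mul (.var _))))))

theorem FieldDom.isDio {z : (σ → F) → F} (hz : IsPolynomialFun z) :
    IsDio (fun x => FieldDom δ π ϱ M K ω S (z x)) :=
  IsDio.ex₁ ((FieldCert.isDio δ π ϱ M K ω S (.var _)).and
    (FieldDiff.isDio δ π M hz.lift (.var _)))

theorem FieldTarget.isDio {t : (σ → F) → F} (ht : IsPolynomialFun t) :
    IsDio (fun x => FieldTarget δ π ϱ M K m ω S ρ (t x)) :=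
  IsDio.ex (IsDio.ex ((IsDio.eq ((IsPolynomialFun.var _).mul (.var _)) (.const 1)).and
    ((IsDio.all fun _ => FieldDom.isDio δ π ϱ M K ω S (.var _)).and
      (IsDio.eq
        ((ht.lift.lift.mul ((IsPolynomialFun.var _).pow m)).mul
          ((IsPolynomialFun.const 1).add (.sum fun _ => (IsPolynomialFun.const _).mul (.var _))))
        ((IsPolynomialFun.const 1).add (.sum fun _ => (IsPolynomialFun.const _).mul (.var _)))))))

end FieldRelations

section Soundness
variable {F Γ : Type*} [Field F] [LinearOrderedCommGroupWithZero Γ]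
  {w : Valuation F Γ} {δ π : F}

theorem valuation_normForm (hδ : w δ ≤ 1) (hroot : ∀ x, w x ≤ 1 → w (x ^ 2 + x - δ) = 1) (x y : F) :
    w (x ^ 2 + x * y - δ * y ^ 2) = max (w x) (w y) ^ 2 := by
  rcases le_or_gt (w x) (w y) with h | h
  · rw [max_eq_right h]
    rcases eq_or_ne y 0 with rfl | hy
    · have : x = 0 := by simpa using h
      simp [this]
    · have hy' : 0 < w y := by simpa [zero_lt_iff] using hy
      have h1 : w (x / y) ≤ 1 := by
        rw [map_div₀]
        exact (div_le_one₀ hy').2 h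
      have e : x ^ 2 + x * y - δ * y ^ 2 = ((x / y) ^ 2 + x / y - δ) * y ^ 2 := by
        field_simp
      rw [e, map_mul, hroot _ h1, map_pow, one_mul]
  · rw [max_eq_left h.le]
    have hx : 0 < w x := lt_of_le_of_lt zero_le h
    have h1 : w (x * y) < w (x ^ 2) := by
      rw [pow_two, map_mul, map_mul]
      exact mul_lt_mul_of_pos_left h hx
    have h2 : w (δ * y ^ 2) < w (x ^ 2) := by
      rw [map_mul, map_pow, map_pow]
      calc w δ * w y ^ 2 ≤ 1 * w y ^ 2 := by gcongr
        _ = w y ^ 2 := one_mul _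
        _ < w x ^ 2 := pow_lt_pow_left₀ h zero_le two_ne_zero
    have h3 : w (x ^ 2 + x * y) = w (x ^ 2) := Valuation.map_add_eq_of_lt_left _ h1
    rw [Valuation.map_sub_eq_of_lt_left _ (by rwa [h3]), h3, map_pow]

theorem natCast_valuation_le_one (w : Valuation F Γ) (n : ℕ) : w (n : F) ≤ 1 := by
  induction n with
  | zero => simp
  | succ n ih =>
    push_cast
    exact Valuation.map_add_le _ ih (by simp)

variable [CharZero F]

theorem valuation_sq_sub (hδ : w δ ≤ 1) (hroot : ∀ x, w x ≤ 1 → w (x ^ 2 + x - δ) = 1) (a b : F) :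
    ∃ s : F, w a ≤ w s ∧ w (a ^ 2 - (1 + 4 * δ) * b ^ 2) = w 4 * w s ^ 2 := by
  have e : a ^ 2 - (1 + 4 * δ) * b ^ 2 =
      4 * (((a - b) / 2) ^ 2 + (a - b) / 2 * b - δ * b ^ 2) := by ring
  have h2 : w (2 : F) ≤ 1 := by exact_mod_cast natCast_valuation_le_one w 2
  have ha : w a ≤ max (w ((a - b) / 2)) (w b) := by
    have : a = 2 * ((a - b) / 2) + b := by ring
    conv_lhs => rw [this]
    refine (Valuation.map_add _ _ _).trans (max_le_max ?_ le_rfl)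
    rw [map_mul]
    exact mul_le_of_le_one_left' h2
  rcases max_choice (w ((a - b) / 2)) (w b) with h | h
  · exact ⟨_, h ▸ ha, by rw [e, map_mul, valuation_normForm hδ hroot, h]⟩
  · exact ⟨_, h ▸ ha, by rw [e, map_mul, valuation_normForm hδ hroot, h]⟩

theorem FieldRep.valuation_le (hδ : w δ ≤ 1) (hroot : ∀ x, w x ≤ 1 → w (x ^ 2 + x - δ) = 1)
    (hπ : ∀ x y : F, w x ^ 2 = w π * w y ^ 2 → w x = 0) {a n : F} (h : FieldRep δ π a n) :
    w 4 * w a ^ 2 ≤ w n := by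
  obtain ⟨b, rfl⟩ := h
  obtain ⟨s, hs, hs'⟩ := valuation_sq_sub hδ hroot a (b 0)
  obtain ⟨s', -, hs2⟩ := valuation_sq_sub hδ hroot (b 1) (b 2)
  have h4 : w (4 : F) ≠ 0 := by simp
  have hle : w 4 * w a ^ 2 ≤ w 4 * w s ^ 2 := by gcongr
  refine hle.trans ?_
  by_cases heq : w (a ^ 2 - (1 + 4 * δ) * b 0 ^ 2) =
      w (π * (b 1 ^ 2 - (1 + 4 * δ) * b 2 ^ 2))
  · rw [map_mul, hs', hs2, mul_left_comm] at heq
    rw [hπ s s' (mul_left_cancel₀ h4 heq)]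
    simp
  · rw [Valuation.map_add_of_distinct_val _ heq, ← hs']
    exact le_max_left _ _

variable {M K : ℕ}

theorem FieldDiff.valuation_le (hδ : w δ ≤ 1) (hroot : ∀ x, w x ≤ 1 → w (x ^ 2 + x - δ) = 1)
    (hπ : ∀ x y : F, w x ^ 2 = w π * w y ^ 2 → w x = 0) {t n : F} (h : FieldDiff δ π M t n) :
    w (4 * (M.factorial : F) ^ 2) * w t ^ 2 ≤ w n := by
  obtain ⟨a, h0, h1, hprod⟩ := h
  have h0' := h0.valuation_le hδ hroot hπ
  have h1' := h1.valuation_le hδ hroot hπ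
  obtain ⟨e, he, he0⟩ := Finset.prod_eq_zero_iff.1 hprod
  obtain ⟨d, hd⟩ := Nat.dvd_factorial (Nat.succ_pos e) (Finset.mem_range.1 he)
  have hM : w (M.factorial : F) ≤ w (e + 1 : F) := by
    rw [hd]
    push_cast
    rw [map_mul]
    exact mul_le_of_le_one_right' (natCast_valuation_le_one w d)
  rw [sub_eq_zero] at he0
  calc w (4 * (M.factorial : F) ^ 2) * w t ^ 2 = w 4 * (w (M.factorial : F) * w t) ^ 2 := by
        rw [map_mul, map_pow, mul_pow, mul_assoc]
    _ ≤ w 4 * (w (e + 1 : F) * w t) ^ 2 := by gcongr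
    _ = w 4 * w (a 0 - a 1) ^ 2 := by rw [← map_mul, he0]
    _ ≤ w 4 * max (w (a 0)) (w (a 1)) ^ 2 := by gcongr; exact Valuation.map_sub _ _ _
    _ ≤ w n := by
        rcases max_choice (w (a 0)) (w (a 1)) with h | h <;> rwa [h]

theorem FieldDigits.valuation_le (hδ : w δ ≤ 1) (hroot : ∀ x, w x ≤ 1 → w (x ^ 2 + x - δ) = 1)
    (hπ : ∀ x y : F, w x ^ 2 = w π * w y ^ 2 → w x = 0) {t n : F} (h : FieldDigits δ π M K t n) :
    w (4 * (M.factorial : F) ^ 2) * w t ^ 2 ≤ w n := by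
  obtain ⟨t', h0, h1, rfl⟩ := h
  have h0' := h0.valuation_le hδ hroot hπ
  have h1' := h1.valuation_le hδ hroot hπ
  have : w (K * t' 0 + t' 1) ≤ max (w (t' 0)) (w (t' 1)) := by
    refine (Valuation.map_add _ _ _).trans (max_le_max ?_ le_rfl)
    rw [map_mul]
    exact mul_le_of_le_one_left' (natCast_valuation_le_one w K)
  calc _ ≤ w (4 * (M.factorial : F) ^ 2) * max (w (t' 0)) (w (t' 1)) ^ 2 := by gcongr
    _ ≤ w n := by rcases max_choice (w (t' 0)) (w (t' 1)) with h | h <;> rwa [h]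

theorem FieldDigits.valuation_mul_le (hδ : w δ ≤ 1)
    (hroot : ∀ x, w x ≤ 1 → w (x ^ 2 + x - δ) = 1)
    (hπ : ∀ x y : F, w x ^ 2 = w π * w y ^ 2 → w x = 0) {t t' n : F}
    (h : FieldDigits δ π M K t n) (h' : FieldDigits δ π M K t' n) :
    w (4 * (M.factorial : F) ^ 2 * (t * t')) ≤ w n := by
  have h0' := h.valuation_le hδ hroot hπ
  have h1' := h'.valuation_le hδ hroot hπ
  rw [map_mul, map_mul w t]
  rcases le_total (w t) (w t') with hle | hle
  · calc _ ≤ w (4 * (M.factorial : F) ^ 2) * (w t' * w t') := by gcongr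
      _ ≤ w n := by rwa [← pow_two]
  · calc _ ≤ w (4 * (M.factorial : F) ^ 2) * (w t * w t) := by gcongr
      _ ≤ w n := by rwa [← pow_two]

variable {ι : Type*} [Fintype ι] {ω : ι → F}

theorem FieldBounded.valuation_le (hδ : w δ ≤ 1) (hroot : ∀ x, w x ≤ 1 → w (x ^ 2 + x - δ) = 1)
    (hπ : ∀ x y : F, w x ^ 2 = w π * w y ^ 2 → w x = 0) (hω : ∀ i, w (ω i) ≤ 1) {y n : F}
    (h : FieldBounded δ π M K ω y n) : w (4 * (M.factorial : F) ^ 2 * y) ≤ w n := by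
  obtain ⟨r, h1, hr, rfl⟩ := h
  rw [Finset.mul_sum]
  refine Valuation.map_sum_le _ fun i _ => ?_
  rw [← mul_assoc, map_mul]
  refine (mul_le_of_le_one_right' (hω i)).trans ?_
  rw [mul_add]
  refine Valuation.map_add_le _ ((hr _).valuation_mul_le hδ hroot hπ (hr _)) ?_
  have := (hr (i, 2)).valuation_mul_le hδ hroot hπ h1
  rwa [mul_one] at this

theorem FieldCert.valuation_le_one (hδ : w δ ≤ 1)
    (hroot : ∀ x, w x ≤ 1 → w (x ^ 2 + x - δ) = 1)
    (hπ : ∀ x y : F, w x ^ 2 = w π * w y ^ 2 → w x = 0) (hω : ∀ i, w (ω i) ≤ 1) (hπ1 : w π < 1)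
    {S : Finset F} (hS : ∀ s ∈ S, w s ≤ 1) {n : F}
    (h : FieldCert δ π (π * (4 * (M.factorial : F) ^ 2)) M K ω S n) : w n ≤ 1 := by
  obtain ⟨c, hc, hb, hn⟩ := h
  obtain ⟨s, hs, hcs⟩ := Finset.prod_eq_zero_iff.1 hc
  rw [sub_eq_zero] at hcs
  have hb' := hb.valuation_le hδ hroot hπ hω
  by_contra! hlt
  have h1 : w n ≤ max (w (c 0)) (w (π * (4 * (M.factorial : F) ^ 2) * c 1)) := by
    conv_lhs => rw [hn]
    exact Valuation.map_add _ _ _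
  have h2 : w (c 0) < w n := (hcs ▸ hS s hs).trans_lt hlt
  have h3 : w (π * (4 * (M.factorial : F) ^ 2) * c 1) < w n := by
    rw [mul_assoc, map_mul]
    calc _ ≤ w π * w n := by gcongr
      _ < 1 * w n := mul_lt_mul_of_pos_right hπ1 (zero_lt_one.trans hlt)
      _ = w n := one_mul _
  exact absurd h1 (not_le.2 (max_lt h2 h3))

theorem FieldDom.valuation_le_one (hδ : w δ ≤ 1)
    (hroot : ∀ x, w x ≤ 1 → w (x ^ 2 + x - δ) = 1)
    (hπ : ∀ x y : F, w x ^ 2 = w π * w y ^ 2 → w x = 0) (hω : ∀ i, w (ω i) ≤ 1) (hπ1 : w π < 1)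
    {S : Finset F} (hS : ∀ s ∈ S, w s ≤ 1) {z : F}
    (h : FieldDom δ π (π * (4 * (M.factorial : F) ^ 2)) M K ω S z) :
    w (4 * (M.factorial : F) ^ 2 * z) ≤ 1 := by
  obtain ⟨n, hn, hz⟩ := h
  have h1 := hn.valuation_le_one hδ hroot hπ hω hπ1 hS
  have h2 := hz.valuation_le hδ hroot hπ
  have hκ : w (4 * (M.factorial : F) ^ 2) ≤ 1 := by
    exact_mod_cast natCast_valuation_le_one w (4 * M.factorial ^ 2)
  have : w (4 * (M.factorial : F) ^ 2 * z) ^ 2 ≤ 1 := by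
    rw [map_mul, mul_pow, pow_two, mul_assoc]
    exact mul_le_one' hκ (h2.trans h1)
  exact (pow_le_one_iff two_ne_zero).1 this

end Soundness

section Local
open NumberField Topology WithZero
variable {k : Type*} [Field k] [NumberField k] (v : HeightOneSpectrum (𝓞 k))

theorem exists_pow_eq_of_near_one {m : ℕ} (hm : 0 < m) : ∃ N : ℕ, ∀ u : v.adicCompletion k,
    Valued.v (u - 1) < exp (-(N : ℤ)) → ∃ y, y ≠ 0 ∧ y ^ m = u := by
  let : NontriviallyNormedField (v.adicCompletion k) := Valued.toNontriviallyNormedField _ ℤᵐ⁰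
  have h1 := (hasStrictDerivAt_pow m (1 : v.adicCompletion k))
  have : CharZero (v.adicCompletion k) := charZero_of_injective_algebraMap (algebraMap k _).injective
  have hne : (m : v.adicCompletion k) * 1 ^ (m - 1) ≠ 0 := by
    simp [hm.ne']
  have h2 := h1.map_nhds_eq hne
  have h3 : (fun x : v.adicCompletion k => x ^ m) '' {x | x ≠ 0} ∈ 𝓝 (1 : v.adicCompletion k) := by
    have := Filter.image_mem_map (m := fun x : v.adicCompletion k => x ^ m)
      (isOpen_ne.mem_nhds (one_ne_zero : (1 : v.adicCompletion k) ≠ 0))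
    rw [h2, one_pow] at this
    exact this
  obtain ⟨γ, hγ⟩ := Valued.mem_nhds.1 h3
  obtain ⟨N, hN⟩ := exists_exp_neg_natCast_lt
    (x := MonoidWithZeroHom.ValueGroup₀.embedding γ.1) (by simp)
  refine ⟨N, fun u hu => ?_⟩
  obtain ⟨y, hy, hyu⟩ := hγ (show Valued.v.restrict (u - 1) < γ.1 by
    rw [Valuation.restrict_lt_iff_lt_embedding]
    exact hu.trans hN)
  exact ⟨y, hy, hyu⟩

theorem exists_algebraMap_near {m : ℕ} {t : k} {a : v.adicCompletion k} (ha : a ≠ 0)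
    (h : a ^ m = algebraMap k (v.adicCompletion k) t) (N : ℕ) :
    ∃ s : k, s ≠ 0 ∧ v.valuation k (t * s ^ m - 1) < exp (-(N : ℤ)) := by
  obtain ⟨c, hc⟩ := HeightOneSpectrum.valuedAdicCompletion_surjective k v (exp (-(N : ℤ)))
  have hopen : IsOpen {x : v.adicCompletion k | x ≠ 0 ∧
      Valued.v.restrict (algebraMap k (v.adicCompletion k) t * x ^ m - 1) < Valued.v.restrict c} := by
    refine isOpen_ne.inter ((Valued.isOpen_ball _ (Valued.v.restrict c)).preimage ?_)
    fun_prop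
  obtain ⟨s, hs0, hs⟩ := (HeightOneSpectrum.denseRange_algebraMap k v).exists_mem_open hopen
    ⟨a⁻¹, inv_ne_zero ha, by
      rw [← h, ← mul_pow, mul_inv_cancel₀ ha, Valuation.restrict_lt_iff, hc]
      simp⟩
  refine ⟨s, by simpa using hs0, ?_⟩
  rw [← HeightOneSpectrum.valuedAdicCompletion_eq_valuation', ← hc, ← Valuation.restrict_lt_iff]
  rw [← map_pow, ← map_mul, ← map_one (algebraMap k (v.adicCompletion k)), ← map_sub] at hs
  exact hs

theorem exists_artinSchreier_element : ∃ δ : 𝓞 k,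
    ∀ x : k, v.valuation k x ≤ 1 → v.valuation k (x ^ 2 + x - (δ : k)) = 1 := by
  have hfin : Finite (𝓞 k ⧸ v.asIdeal) := Ideal.finiteQuotientOfFreeOfNeBot _ v.ne_bot
  have hnt : Nontrivial (𝓞 k ⧸ v.asIdeal) := Ideal.Quotient.nontrivial_iff.2 v.isPrime.ne_top
  have hns : ¬ Function.Surjective (fun x : 𝓞 k ⧸ v.asIdeal => x ^ 2 + x) := by
    intro h
    have hinj := Finite.injective_iff_surjective.2 h
    have : (0 : 𝓞 k ⧸ v.asIdeal) = -1 := hinj (by simp)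
    exact one_ne_zero (neg_eq_zero.1 this.symm)
  rw [Function.Surjective] at hns
  push Not at hns
  obtain ⟨d, hd⟩ := hns
  obtain ⟨δ, rfl⟩ := Ideal.Quotient.mk_surjective d
  refine ⟨δ, fun x hx => ?_⟩
  obtain ⟨a, ha⟩ := v.exists_valuation_sub_lt_of_integer hx 1
  rw [Units.val_one] at ha
  have h1 : v.valuation k ((a : k) ^ 2 + a - δ) = 1 := by
    have : a ^ 2 + a - δ ∉ v.asIdeal := by
      intro h
      apply hd (Ideal.Quotient.mk _ a)
      rw [← map_pow, ← map_add, Ideal.Quotient.eq]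
      exact h
    have h2 := (v.valuation_eq_one_iff_notMem (K := k)).2 this
    simpa using h2
  have h2 : v.valuation k ((x - a) * (x + a + 1)) < 1 := by
    rw [map_mul, Valuation.map_sub_swap]
    refine mul_lt_one_of_lt_of_le ha ?_
    exact Valuation.map_add_le _ (Valuation.map_add_le _ hx (v.valuation_le_one a)) (by simp)
  have e : x ^ 2 + x - (δ : k) = ((a : k) ^ 2 + a - δ) + (x - a) * (x + a + 1) := by ring
  rw [e, Valuation.map_add_eq_of_lt_left _ (by rwa [h1]), h1]

theorem eq_zero_of_sq_eq_exp_mul_sq {a b : WithZero (Multiplicative ℤ)}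
    (h : a ^ 2 = exp (-1 : ℤ) * b ^ 2) : a = 0 := by
  by_contra ha
  have hb : b ≠ 0 := by
    rintro rfl
    simp [ha] at h
  have := congrArg log h
  rw [log_mul (by simp) (by simp [hb]), log_pow, log_pow, log_exp] at this
  simp only [nsmul_eq_mul] at this
  push_cast at this
  omega

theorem exists_congr_one_mul_isIntegral {L : ℕ} {r : k} (hr : v.valuation k (r - 1) < exp (-(L : ℤ))) :
    ∃ x y : 𝓞 k, x - 1 ∈ v.asIdeal ^ L ∧ y - 1 ∈ v.asIdeal ^ L ∧ r * x = y := by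
  have hL1 : exp (-(L : ℤ)) ≤ 1 := by
    rw [← exp_zero, exp_le_exp]
    omega
  have hr1 : v.valuation k r ≤ 1 := by
    have : r = (r - 1) + 1 := by ring
    rw [this]
    exact Valuation.map_add_le _ (hr.le.trans hL1) (by simp)
  obtain ⟨n, ⟨d, hd⟩, hnd⟩ := v.exists_primeCompl_mul_eq_of_integer r hr1
  rw [← v.intValuation_eq_one_iff_mem_primeCompl] at hd
  obtain ⟨y, hy⟩ := v.exists_intValuation_mul_sub_lt (a := d) (b := 1) (by simp [hd])
    (Multiplicative.ofAdd (-(L : ℤ)))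
  have hy' : v.valuation k (((y * d : 𝓞 k) : k) - 1) ≤ exp (-(L : ℤ)) := by
    have : ((y * d : 𝓞 k) : k) - 1 = ((y * d - 1 : 𝓞 k) : k) := by simp
    rw [this, v.valuation_of_algebraMap, Valuation.map_sub_swap]
    exact hy.le
  have hyn : r * ((y * d : 𝓞 k) : k) = ((y * n : 𝓞 k) : k) :=
    calc r * ((y * d : 𝓞 k) : k) = r * ((y : k) * (d : k)) := congrArg _ (map_mul (algebraMap (𝓞 k) k) y d)
      _ = (y : k) * (r * (d : k)) := mul_left_comm _ _ _
      _ = (y : k) * (n : k) := congrArg _ hnd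
      _ = ((y * n : 𝓞 k) : k) := (map_mul (algebraMap (𝓞 k) k) y n).symm
  refine ⟨y * d, y * n, ?_, ?_, hyn⟩
  · rw [← v.intValuation_le_pow_iff_mem, Valuation.map_sub_swap]
    exact hy.le
  · rw [← v.intValuation_le_pow_iff_mem, ← v.valuation_of_algebraMap (K := k)]
    have : ((y * n - 1 : 𝓞 k) : k) = (r - 1) * ((y * d : 𝓞 k) : k) + (((y * d : 𝓞 k) : k) - 1) :=
      calc ((y * n - 1 : 𝓞 k) : k) = ((y * n : 𝓞 k) : k) - 1 := by simp
        _ = _ := by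
          rw [← hyn]
          ring
    change v.valuation k ((y * n - 1 : 𝓞 k) : k) ≤ _
    rw [this]
    refine Valuation.map_add_le _ ?_ hy'
    rw [map_mul]
    exact (mul_le_of_le_one_right' (v.valuation_le_one _)).trans hr.le

theorem FieldTarget.exists_pow_eq {δ π ϱ κ : k} {M K m N : ℕ} {ι J : Type*} [Fintype ι] [Fintype J]
    {ω : ι → k} {S : Finset k} {ρ : J → k}
    (hN : ∀ u : v.adicCompletion k, Valued.v (u - 1) < exp (-(N : ℤ)) → ∃ y, y ≠ 0 ∧ y ^ m = u)
    (hκ : κ ≠ 0) (hρ : ∀ j, v.valuation k (ρ j) < exp (-(N : ℤ)) * v.valuation k κ)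
    (hdom : ∀ z, FieldDom δ π ϱ M K ω S z → v.valuation k (κ * z) ≤ 1) {t : k}
    (h : FieldTarget δ π ϱ M K m ω S ρ t) :
    ∃ a : v.adicCompletion k, a ≠ 0 ∧ a ^ m = algebraMap k (v.adicCompletion k) t := by
  obtain ⟨s, c, hs, hc, heq⟩ := h
  have hκ' : 0 < v.valuation k κ := by simpa [zero_lt_iff] using hκ
  have key : ∀ i, ∃ y : v.adicCompletion k, y ≠ 0 ∧
      y ^ m = algebraMap k (v.adicCompletion k) (1 + ∑ j, ρ j * c (j, i)) := by
    intro i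
    apply hN
    have e : algebraMap k (v.adicCompletion k) (1 + ∑ j, ρ j * c (j, i)) - 1 =
        ((∑ j, ρ j * c (j, i) : k) : v.adicCompletion k) := by
      rw [map_add, map_one, add_sub_cancel_left]
      rfl
    rw [e, HeightOneSpectrum.valuedAdicCompletion_eq_valuation']
    refine Valuation.map_sum_lt _ (by simp) fun j _ => ?_
    have h1 := hdom _ (hc (j, i))
    refine lt_of_mul_lt_mul_right (a := v.valuation k κ) ?_ zero_le
    calc v.valuation k (ρ j * c (j, i)) * v.valuation k κ
        = v.valuation k (ρ j) * v.valuation k (κ * c (j, i)) := by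
          rw [← map_mul, ← map_mul]
          ring_nf
      _ ≤ v.valuation k (ρ j) := mul_le_of_le_one_right' h1
      _ < _ := hρ j
  obtain ⟨y₀, hy₀, hy₀m⟩ := key 0
  obtain ⟨y₁, hy₁, hy₁m⟩ := key 1
  have hs0 : s 0 ≠ 0 := left_ne_zero_of_mul_eq_one hs
  have hs0' : algebraMap k (v.adicCompletion k) (s 0) ≠ 0 := by simpa using hs0
  refine ⟨y₀ / (algebraMap k _ (s 0) * y₁), div_ne_zero hy₀ (mul_ne_zero hs0' hy₁), ?_⟩
  rw [div_pow, mul_pow, hy₀m, hy₁m, div_eq_iff, ← map_pow, ← map_mul, ← map_mul, ← heq, mul_assoc]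
  rw [← hy₁m]
  exact mul_ne_zero (pow_ne_zero _ hs0') (pow_ne_zero _ hy₁)

end Local

section Final
open NumberField WithZero
variable {k : Type*} [Field k] [NumberField k]

theorem IntRep.fieldRep {δ Δ π a n : 𝓞 k} (hΔ : (Δ : k) = 1 + 4 * δ)
    (h : IntRep (-(Δ * π ^ 2)) (π * π ^ 2) (-(π * Δ * π ^ 2)) a n) :
    FieldRep (δ : k) (π : k) (a : k) (n : k) := by
  obtain ⟨u, rfl⟩ := h
  refine ⟨![π * u.1, π * u.2.1, π * u.2.2], ?_⟩
  simp only [ternaryForm, Matrix.cons_val]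
  push_cast
  rw [show (Algebra.cast Δ : k) = 1 + 4 * δ from hΔ]
  ring

theorem IntDiff.fieldDiff {δ Δ π t n : 𝓞 k} {M : ℕ} (hΔ : (Δ : k) = 1 + 4 * δ)
    (h : IntDiff (-(Δ * π ^ 2)) (π * π ^ 2) (-(π * Δ * π ^ 2)) M t n) :
    FieldDiff (δ : k) (π : k) M (t : k) (n : k) := by
  obtain ⟨a, a', ha, ha', e, he, heM, heq⟩ := h
  refine ⟨![(a : k), (a' : k)], ha.fieldRep hΔ, ha'.fieldRep hΔ, ?_⟩
  refine Finset.prod_eq_zero (i := e - 1) (Finset.mem_range.2 (by omega)) ?_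
  have h1 : ((e : k)) * (t : k) = (a : k) - a' := by
    have := congrArg (fun x : 𝓞 k => (x : k)) heq
    simpa using this
  have h2 : ((e - 1 : ℕ) : k) + 1 = e := by
    rw [Nat.cast_sub he]
    simp
  rw [h2, h1]
  simp

theorem IntDigits.fieldDigits {δ Δ π t n : 𝓞 k} {M K : ℕ} (hΔ : (Δ : k) = 1 + 4 * δ)
    (h : IntDigits (-(Δ * π ^ 2)) (π * π ^ 2) (-(π * Δ * π ^ 2)) M K t n) :
    FieldDigits (δ : k) (π : k) M K (t : k) (n : k) := by
  obtain ⟨t₀, t₁, h₀, h₁, rfl⟩ := h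
  refine ⟨![(t₀ : k), (t₁ : k)], h₀.fieldDiff hΔ, h₁.fieldDiff hΔ, ?_⟩
  simp

/-- The diophantine set attached to suitable parameters contains the ring of integers and has
bounded denominators at `v`. -/
theorem exists_fieldDom (v : HeightOneSpectrum (𝓞 k)) :
    ∃ (δ π ϱ κ : k) (M K : ℕ) (S : Finset k), κ ≠ 0 ∧
      (∀ z : 𝓞 k, FieldDom δ π ϱ M K (fun i => (RingOfIntegers.basis k i : k)) S (z : k)) ∧
      ∀ z : k, FieldDom δ π ϱ M K (fun i => (RingOfIntegers.basis k i : k)) S z →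
        v.valuation k (κ * z) ≤ 1 := by
  classical
  obtain ⟨δ, hδ⟩ := exists_artinSchreier_element v
  obtain ⟨π, hπ⟩ := v.intValuation_exists_uniformizer
  have hπw : v.valuation k (π : k) = exp (-1 : ℤ) := by
    rw [← hπ]
    exact v.valuation_of_algebraMap π
  have hlt : v.valuation k (π : k) < 1 := by
    rw [hπw, ← exp_zero, exp_lt_exp]
    norm_num
  have hπv : π ∈ v.asIdeal := (v.valuation_lt_one_iff_mem (K := k) π).1 hlt
  have hπ0 : π ≠ 0 := by
    rintro rfl
    rw [map_zero] at hπ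
    exact exp_ne_zero hπ.symm
  obtain ⟨Δ, hΔ⟩ : ∃ Δ : 𝓞 k, (Δ : k) = 1 + 4 * δ :=
    ⟨1 + (δ + δ + δ + δ), by push_cast; ring⟩
  have hΔ0 : Δ ≠ 0 := by
    rintro rfl
    have h1 := valuation_normForm (w := v.valuation k) (v.valuation_le_one δ) hδ (-1) 2
    have h2 : ((-1 : k)) ^ 2 + (-1) * 2 - (δ : k) * 2 ^ 2 = -((0 : 𝓞 k) : k) := by
      rw [hΔ]
      ring
    rw [h2] at h1
    have h3 : max (v.valuation k (-1)) (v.valuation k 2) = 0 := by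
      simpa using h1.symm
    have h4 : v.valuation k (-1 : k) ≤ 0 := h3 ▸ le_max_left _ _
    simp at h4
  obtain ⟨M, -, hM⟩ := exists_certificate v.asIdeal v.isPrime
    (-(Δ * π ^ 2)) (π * π ^ 2) (-(π * Δ * π ^ 2))
    (neg_ne_zero.2 (mul_ne_zero hΔ0 (pow_ne_zero _ hπ0))) (mul_ne_zero hπ0 (pow_ne_zero _ hπ0))
    (neg_ne_zero.2 (mul_ne_zero (mul_ne_zero hπ0 hΔ0) (pow_ne_zero _ hπ0)))
    (neg_mem (Ideal.mul_mem_left _ _ (Ideal.pow_mem_of_mem _ hπv 2 two_pos)))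
    (Ideal.mul_mem_right _ _ hπv)
    (neg_mem (Ideal.mul_mem_left _ _ (Ideal.pow_mem_of_mem _ hπv 2 two_pos)))
  have hκ : (4 * (M.factorial : k) ^ 2) ≠ 0 :=
    mul_ne_zero (by norm_num) (pow_ne_zero _ (Nat.cast_ne_zero.2 M.factorial_ne_zero))
  obtain ⟨ϱ, hϱk⟩ : ∃ ϱ : 𝓞 k, (ϱ : k) = (π : k) * (4 * (M.factorial : k) ^ 2) := by
    refine ⟨π * ((M.factorial : 𝓞 k) ^ 2 + (M.factorial : 𝓞 k) ^ 2 + (M.factorial : 𝓞 k) ^ 2 +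
      (M.factorial : 𝓞 k) ^ 2), ?_⟩
    push_cast
    ring
  have hϱ0 : ϱ ≠ 0 := by
    refine RingOfIntegers.coe_ne_zero_iff.1 (hϱk.trans_ne ?_)
    exact mul_ne_zero (RingOfIntegers.coe_ne_zero_iff.2 hπ0) hκ
  have hfin : Finite (𝓞 k ⧸ Ideal.span {ϱ}) :=
    Ideal.finiteQuotientOfFreeOfNeBot _ (by simpa using hϱ0)
  have := Fintype.ofFinite (𝓞 k ⧸ Ideal.span {ϱ})
  obtain ⟨K, hK⟩ := hM ϱ hϱ0
    (Finset.univ.image fun x : 𝓞 k ⧸ Ideal.span {ϱ} => Quotient.out x)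
  refine ⟨δ, π, ϱ, 4 * (M.factorial : k) ^ 2, M, K,
    Finset.univ.image fun x : 𝓞 k ⧸ Ideal.span {ϱ} => ((Quotient.out x : 𝓞 k) : k), hκ, ?_, ?_⟩
  · intro z
    obtain ⟨n, -, hz, h1, hn⟩ := hK z
    obtain ⟨q, hq⟩ : ∃ q, n = Quotient.out (Ideal.Quotient.mk (Ideal.span {ϱ}) n) + ϱ * q := by
      have : n - Quotient.out (Ideal.Quotient.mk (Ideal.span {ϱ}) n) ∈ Ideal.span {ϱ} := by
        rw [← Ideal.Quotient.eq]
        exact (Quotient.out_eq _).symm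
      obtain ⟨q, hq⟩ := Ideal.mem_span_singleton.1 this
      exact ⟨q, by rw [← hq]; ring⟩
    obtain ⟨r, r', r'', hr, hqr⟩ := hn _ (Finset.mem_image_of_mem _ (Finset.mem_univ _)) q hq
    refine ⟨n, ⟨![((Quotient.out (Ideal.Quotient.mk (Ideal.span {ϱ}) n) : 𝓞 k) : k), (q : k)],
      ?_, ?_, ?_⟩, hz.fieldDiff hΔ⟩
    · exact Finset.prod_eq_zero (Finset.mem_image_of_mem _ (Finset.mem_univ _)) (sub_self _)
    · refine ⟨fun j => (![r j.1, r'' j.1, r' j.1] j.2 : ℤ), ?_, ?_, ?_⟩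
      · simpa using h1.fieldDigits hΔ
      · rintro ⟨i, j⟩
        fin_cases j
        · simpa using (hr i).1.fieldDigits hΔ
        · simpa using (hr i).2.2.fieldDigits hΔ
        · simpa using (hr i).2.1.fieldDigits hΔ
      · simp only [Matrix.cons_val]
        rw [hqr]
        simp
    · have := congrArg (fun x : 𝓞 k => (x : k)) hq
      simpa using this
  · intro z hz
    rw [hϱk] at hz
    refine hz.valuation_le_one (v.valuation_le_one δ) hδ ?_ (fun i => v.valuation_le_one _) hlt ?_
    · intro x y h
      rw [hπw] at h
      exact eq_zero_of_sq_eq_exp_mul_sq h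
    · intro s hs
      obtain ⟨x, -, rfl⟩ := Finset.mem_image.1 hs
      exact v.valuation_le_one _

theorem exists_fieldTarget (v : HeightOneSpectrum (𝓞 k)) {m : ℕ} (hm : 0 < m) :
    ∃ (δ π ϱ : k) (M K : ℕ) (S : Finset k) (J : ℕ) (ρ : Fin J → k), ∀ t : k,
      (∃ a : v.adicCompletion k, a ≠ 0 ∧ a ^ m = algebraMap k (v.adicCompletion k) t) ↔
        FieldTarget δ π ϱ M K m (fun i => (RingOfIntegers.basis k i : k)) S ρ t := by
  obtain ⟨δ, π, ϱ, κ, M, K, S, hκ, hint, hdom⟩ := exists_fieldDom v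
  obtain ⟨N, hN⟩ := exists_pow_eq_of_near_one v hm
  obtain ⟨L, hL⟩ := exists_exp_neg_natCast_lt (x := exp (-(N : ℤ)) * v.valuation k κ)
    (mul_ne_zero (by simp) (by simpa using hκ))
  obtain ⟨J, ρ, hρ⟩ := Submodule.fg_iff_exists_fin_generating_family.1
    (IsNoetherian.noetherian (v.asIdeal ^ L))
  have hgen : ∀ x ∈ v.asIdeal ^ L, ∃ c : Fin J → 𝓞 k, ∑ j, c j * ρ j = x := by
    intro x hx
    rw [← hρ] at hx
    exact Ideal.mem_span_range_iff_exists_fun.1 hx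
  refine ⟨δ, π, ϱ, M, K, S, J, fun j => (ρ j : k), fun t => ⟨?_, ?_⟩⟩
  · rintro ⟨a, ha, h⟩
    obtain ⟨s, hs, hst⟩ := exists_algebraMap_near v ha h L
    obtain ⟨x, y, hx, hy, hxy⟩ := exists_congr_one_mul_isIntegral v hst
    obtain ⟨c, hc⟩ := hgen _ hx
    obtain ⟨d, hd⟩ := hgen _ hy
    have hc' : (1 : k) + ∑ j, (ρ j : k) * (c j : k) = x := by
      have := congrArg (fun x : 𝓞 k => (x : k)) hc
      simp only [map_sum, map_mul, map_sub, map_one] at this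
      simp only [mul_comm ((ρ _ : 𝓞 k) : k), this]
      ring
    have hd' : (1 : k) + ∑ j, (ρ j : k) * (d j : k) = y := by
      have := congrArg (fun x : 𝓞 k => (x : k)) hd
      simp only [map_sum, map_mul, map_sub, map_one] at this
      simp only [mul_comm ((ρ _ : 𝓞 k) : k), this]
      ring
    refine ⟨![s, s⁻¹], fun j => ((![d j.1, c j.1] j.2 : 𝓞 k) : k), ?_, fun j => hint _, ?_⟩
    · simpa using mul_inv_cancel₀ hs
    · simp only [Matrix.cons_val]
      rw [hc', hd', hxy]
  · refine FieldTarget.exists_pow_eq v hN hκ (fun j => lt_of_le_of_lt ?_ hL) hdom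
    have : ρ j ∈ v.asIdeal ^ L := by
      rw [← hρ]
      exact Submodule.subset_span ⟨j, rfl⟩
    rw [← v.intValuation_le_pow_iff_mem] at this
    exact (v.valuation_of_algebraMap (ρ j)).trans_le this

end Final

/-- For a number field `k`, a nonarchimedean place `v`, and `m ∈ ℤ_{>0}`, the set
`k_v^{×m} ∩ k` of nonzero elements of `k` that are `m`-th powers in `k_v` is
diophantine over `k`. -/
theorem mth_powers_in_completion_isDiophantine (k : Type*) [Field k] [NumberField k]
    (v : HeightOneSpectrum (NumberField.RingOfIntegers k)) (m : ℕ) (hm : 0 < m) :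
    IsDiophantineSet k
      {t : k | ∃ a : v.adicCompletion k, a ≠ 0 ∧ a ^ m = algebraMap k (v.adicCompletion k) t} := by
  obtain ⟨δ, π, ϱ, M, K, S, J, ρ, h⟩ := exists_fieldTarget v hm
  convert (FieldTarget.isDio δ π ϱ M K m (fun i => (NumberField.RingOfIntegers.basis k i : k)) S ρ
    (IsPolynomialFun.var (0 : Fin 1))).isDiophantine using 1
  rw [IsDiophantineSet]
  congr! 2
  ext x
  exact h (x 0)
end

section
/- Let k be a number field, let k_v be the completion of k at a nonarchimedean place v, and let m ∈ ℤ_{>0}. Then the subgroup k_v^{×m} of m-th powers has finite index in the multiplicative group k_v^×; equivalently, the quotient group k_v^×/k_v^{×m} is finite. -/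
open IsDedekindDomain

section NormedField

variable {K : Type*} [NontriviallyNormedField K]

theorem isOpen_range_powMonoidHom_units [CompleteSpace K] {m : ℕ} (hm : (m : K) ≠ 0) :
    IsOpen ((powMonoidHom m : Kˣ →* Kˣ).range : Set Kˣ) := by
  refine Subgroup.isOpen_of_mem_nhds _ (g := 1) ?_
  have hm0 : m ≠ 0 := by rintro rfl; simp at hm
  have h := (hasStrictDerivAt_pow m (1 : K)).map_nhds_eq (by simpa using hm)
  rw [one_pow] at h
  have hmem : (fun x : K => x ^ m) '' Set.univ ∈ nhds (1 : K) := by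
    rw [← h]; exact Filter.image_mem_map Filter.univ_mem
  filter_upwards [Units.continuous_val.continuousAt.preimage_mem_nhds
    (t := (fun x : K => x ^ m) '' Set.univ) (x := (1 : Kˣ)) hmem] with u hu
  obtain ⟨x, -, hx⟩ := hu
  have hx0 : x ≠ 0 := by
    rintro rfl
    exact u.ne_zero (by simpa [hm0] using hx.symm)
  exact ⟨Units.mk0 x hx0, Units.ext hx⟩

theorem isCompact_setOf_norm_units_mem_Icc [ProperSpace K] {r : ℝ} (hr : 0 < r) (s : ℝ) :
    IsCompact {u : Kˣ | ‖(u : K)‖ ∈ Set.Icc r s} := by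
  have hA : IsCompact {x : K | ‖x‖ ∈ Set.Icc r s} :=
    (isCompact_closedBall (0 : K) s).of_isClosed_subset (isClosed_Icc.preimage continuous_norm)
      fun x hx => by simpa using hx.2
  refine (Units.isOpenEmbedding_val.isInducing.isCompact_preimage_iff fun x hx => ?_).2 hA
  exact ⟨Units.mk0 x (norm_pos_iff.1 (hr.trans_le hx.1)), rfl⟩

theorem finiteIndex_range_powMonoidHom_units [ProperSpace K] {m : ℕ} (hm : (m : K) ≠ 0) :
    (powMonoidHom m : Kˣ →* Kˣ).range.FiniteIndex := by
  set H := (powMonoidHom m : Kˣ →* Kˣ).range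
  have hm0 : m ≠ 0 := by rintro rfl; simp at hm
  have : DiscreteTopology (Kˣ ⧸ H) :=
    QuotientGroup.discreteTopology (isOpen_range_powMonoidHom_units hm)
  obtain ⟨c, hc⟩ := NormedField.exists_one_lt_norm K
  have hc0 : 0 < ‖c‖ := zero_lt_one.trans hc
  have hcm : 1 < ‖c‖ ^ m := one_lt_pow₀ hc hm0
  have hcm0 : 0 < ‖c‖ ^ m := zero_lt_one.trans hcm
  have hA := (isCompact_setOf_norm_units_mem_Icc (K := K) (inv_pos.2 hcm0) 1).image
    (QuotientGroup.continuous_mk (N := H))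
  have : CompactSpace (Kˣ ⧸ H) := by
    refine ⟨?_⟩
    convert hA
    refine (Set.eq_univ_of_forall fun q => ?_).symm
    obtain ⟨u, rfl⟩ := QuotientGroup.mk_surjective q
    obtain ⟨n, hn⟩ := exists_mem_Ioc_zpow (norm_pos_iff.2 u.ne_zero) hcm
    let d : Kˣ := Units.mk0 c (norm_pos_iff.1 hc0)
    refine ⟨u * (d ^ (-(n + 1))) ^ m, ?_, ?_⟩
    · have key : ‖((u * (d ^ (-(n + 1))) ^ m : Kˣ) : K)‖ =
          ‖(u : K)‖ / (‖c‖ ^ m) ^ (n + 1) := by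
        simp only [Units.val_mul, Units.val_pow_eq_pow_val, Units.val_zpow_eq_zpow_val,
          Units.val_mk0, norm_mul, norm_pow, norm_zpow, d]
        rw [zpow_neg, inv_pow, div_eq_mul_inv, ← zpow_natCast, ← zpow_natCast, ← zpow_mul,
          ← zpow_mul, mul_comm (m : ℤ)]
      rw [Set.mem_ofPred_eq, key]
      have hp : 0 < (‖c‖ ^ m) ^ (n + 1) := zpow_pos hcm0 _
      refine ⟨?_, (div_le_one hp).2 hn.2⟩
      rw [le_div_iff₀ hp, zpow_add_one₀ hcm0.ne', mul_comm, mul_assoc, mul_inv_cancel₀ hcm0.ne',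
        mul_one]
      exact hn.1.le
    · exact QuotientGroup.mk_mul_of_mem u ⟨d ^ (-(n + 1)), rfl⟩
  have : Finite (Kˣ ⧸ H) := finite_of_compact_of_discrete
  exact Subgroup.finiteIndex_of_finite_quotient

end NormedField

namespace IsDedekindDomain.HeightOneSpectrum

variable {R K : Type*} [CommRing R] [IsDedekindDomain R] [Field K] [Algebra R K]
  [IsFractionRing R K] (v : HeightOneSpectrum R)

theorem valued_algebraMap_adicCompletion (y : K) :
    Valued.v (algebraMap K (v.adicCompletion K) y) = v.valuation K y :=
  valuedAdicCompletion_eq_valuation' v y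

theorem exists_valued_sub_algebraMap_lt_one {x : v.adicCompletion K} (hx : Valued.v x ≤ 1) :
    ∃ r : R, Valued.v (x - algebraMap K (v.adicCompletion K) (algebraMap R K r)) < 1 := by
  have hopen : IsOpen {y : v.adicCompletion K | Valued.v (x - y) < 1} := by
    have h := (Valued.isOpen_ball (v.adicCompletion K) 1).preimage
      (continuous_const.sub continuous_id : Continuous fun y => x - y)
    convert h using 1
    ext y
    simp [Valuation.restrict_lt_one_iff]
  obtain ⟨y, hy⟩ := (denseRange_algebraMap K v).exists_mem_open hopen ⟨x, by simp⟩
  rw [Set.mem_ofPred_eq] at hy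
  have hy1 : v.valuation K y ≤ 1 := by
    have h := Valued.v.map_sub x (x - algebraMap K (v.adicCompletion K) y)
    rw [sub_sub_cancel, valued_algebraMap_adicCompletion] at h
    exact h.trans (max_le hx hy.le)
  obtain ⟨r, hr⟩ := v.exists_valuation_sub_lt_of_integer hy1 1
  refine ⟨r, ?_⟩
  rw [Valuation.map_sub_swap, ← valued_algebraMap_adicCompletion, map_sub, Units.val_one] at hr
  rw [← sub_add_sub_cancel x (algebraMap K (v.adicCompletion K) y)]
  exact Valued.v.map_add_lt hy hr

theorem residue_adicCompletionIntegers_eq_zero_iff {x : v.adicCompletionIntegers K} :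
    IsLocalRing.residue (v.adicCompletionIntegers K) x = 0 ↔
      Valued.v (x : v.adicCompletion K) < 1 := by
  rw [IsLocalRing.residue_eq_zero_iff]
  exact Valuation.mem_maximalIdeal_iff _ _

theorem finite_residueField_adicCompletion [Finite (R ⧸ v.asIdeal)] :
    Finite (IsLocalRing.ResidueField (v.adicCompletionIntegers K)) := by
  let f : R →+* IsLocalRing.ResidueField (v.adicCompletionIntegers K) :=
    (IsLocalRing.residue (v.adicCompletionIntegers K)).comp
      (algebraMap R (v.adicCompletionIntegers K))
  have hf : ∀ a ∈ v.asIdeal, f a = 0 := fun a ha =>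
    v.residue_adicCompletionIntegers_eq_zero_iff.2 <|
      (v.valued_algebraMap_adicCompletion (algebraMap R K a)).trans_lt
        ((v.valuation_lt_one_iff_mem a).2 ha)
  refine Finite.of_surjective (Ideal.Quotient.lift v.asIdeal f hf)
    (Ideal.Quotient.lift_surjective_of_surjective _ _ fun q => ?_)
  obtain ⟨x, rfl⟩ := IsLocalRing.residue_surjective q
  obtain ⟨r, hr⟩ := v.exists_valued_sub_algebraMap_lt_one x.2
  refine ⟨r, (sub_eq_zero.1 ?_).symm⟩
  rw [RingHom.comp_apply, ← map_sub]
  exact v.residue_adicCompletionIntegers_eq_zero_iff.2 hr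

end IsDedekindDomain.HeightOneSpectrum

theorem NumberField.properSpace_adicCompletion (k : Type*) [Field k] [NumberField k]
    (v : HeightOneSpectrum (NumberField.RingOfIntegers k)) :
    @ProperSpace (v.adicCompletion k)
      (Valued.toNormedField (v.adicCompletion k) _).toMetricSpace.toPseudoMetricSpace := by
  have : Finite (NumberField.RingOfIntegers k ⧸ v.asIdeal) :=
    v.asIdeal.finiteQuotientOfFreeOfNeBot v.ne_bot
  open Valued.integer in
  rw [properSpace_iff_completeSpace_and_isDiscreteValuationRing_integer_and_finite_residueField]
  exact ⟨inferInstance, inferInstanceAs (IsDiscreteValuationRing (v.adicCompletionIntegers k)),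
    v.finite_residueField_adicCompletion⟩

/-- For a number field `k`, a nonarchimedean place `v` with completion `k_v`, and `m ∈ ℤ_{>0}`,
the subgroup `k_v^{×m}` of `m`-th powers has finite index in `k_v^×`. -/
theorem pow_subgroup_finiteIndex (k : Type*) [Field k] [NumberField k]
    (v : HeightOneSpectrum (NumberField.RingOfIntegers k)) (m : ℕ) (hm : 0 < m) :
    ((powMonoidHom m : (v.adicCompletion k)ˣ →* (v.adicCompletion k)ˣ).range).FiniteIndex := by
  let _ := Valued.toNontriviallyNormedField (v.adicCompletion k) (WithZero (Multiplicative ℤ))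
  have := NumberField.properSpace_adicCompletion k v
  have : CharZero (v.adicCompletion k) :=
    charZero_of_injective_algebraMap (algebraMap k (v.adicCompletion k)).injective
  exact finiteIndex_range_powMonoidHom_units (Nat.cast_ne_zero.2 hm.ne')
end
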